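/- arXiv:1004.1854 — 5 statements merged into one kernel-verified Lean document; each statement's English description precedes it below -/
import Mathlib

section
/- In every network contribution game in which all reward functions f_e belong to class C, every pairwise equilibrium achieves at least half of the optimal social welfare: if s is a pairwise equilibrium, then for every state s* one has w(s*) ≤ 2·w(s). In particular, for games with rewards in class C that possess a pairwise equilibrium, the price of anarchy for pairwise equilibria is at most 2. -/
open Finset

/-- A network contribution game on a finite simple undirected graph. -/
structure NCGame (V : Type) [Fintype V] [DecidableEq V] where
  /-- adjacency relation of the (simple, undirected) graph -/
  Adj : V → V → Prop
  adj_symm : ∀ u v, Adj u v → Adj v u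
  adj_irrefl : ∀ v, ¬ Adj v v
  /-- budget of each player -/
  B : V → ℝ
  B_nonneg : ∀ v, 0 ≤ B v
  /-- reward function of each edge; `f u v x y` is the reward of edge `(u,v)`
  when `u` contributes `x` and `v` contributes `y`. -/
  f : V → V → ℝ → ℝ → ℝ
  f_comm : ∀ u v x y, f u v x y = f v u x y
  f_symm : ∀ u v x y, f u v x y = f u v y x
  f_nonneg : ∀ u v x y, 0 ≤ x → 0 ≤ y → 0 ≤ f u v x y
  f_mono : ∀ u v y, 0 ≤ y → MonotoneOn (fun x => f u v x y) (Set.Ici 0)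

variable {V : Type} [Fintype V] [DecidableEq V]

/-- A state: `s v u` is the effort player `v` puts on the edge `(v,u)`.
It is valid if efforts are nonnegative, supported on edges, and within budget. -/
def validState (g : NCGame V) (s : V → V → ℝ) : Prop :=
  (∀ v u, 0 ≤ s v u) ∧ (∀ v u, ¬ g.Adj v u → s v u = 0) ∧
  (∀ v, ∑ u, s v u ≤ g.B v)

open Classical in
/-- utility of player `v` -/
noncomputable def util (g : NCGame V) (s : V → V → ℝ) (v : V) : ℝ :=
  ∑ u, if g.Adj v u then g.f v u (s v u) (s u v) else 0

/-- social welfare -/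
noncomputable def welfare (g : NCGame V) (s : V → V → ℝ) : ℝ :=
  ∑ v, util g s v

/-- Nash equilibrium: no unilateral improving deviation. -/
def IsNashEq (g : NCGame V) (s : V → V → ℝ) : Prop :=
  validState g s ∧
  ∀ v (t : V → ℝ), validState g (Function.update s v t) →
    util g (Function.update s v t) v ≤ util g s v

/-- Pairwise equilibrium: Nash and no bilateral improving deviation. -/
def IsPairwiseEq (g : NCGame V) (s : V → V → ℝ) : Prop :=
  IsNashEq g s ∧
  ∀ u v (tu tv : V → ℝ), u ≠ v →
    validState g (Function.update (Function.update s u tu) v tv) →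
    ¬(util g s u < util g (Function.update (Function.update s u tu) v tv) u ∧
      util g s v < util g (Function.update (Function.update s u tu) v tv) v)

/-- Strong equilibrium: no coalition has a joint deviation strictly improving
the utility of all its members. -/
def IsStrongEq (g : NCGame V) (s : V → V → ℝ) : Prop :=
  validState g s ∧
  ∀ (C : Finset V) (s' : V → V → ℝ), C.Nonempty → validState g s' →
    (∀ v, v ∉ C → s' v = s v) →
    ∃ v ∈ C, util g s' v ≤ util g s v

/-- class `C`: symmetric, nonnegative, nondecreasing, coordinate-convex. -/
def InClassC (f : ℝ → ℝ → ℝ) : Prop :=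
  (∀ x y, 0 ≤ x → 0 ≤ y → 0 ≤ f x y) ∧
  (∀ x y, f x y = f y x) ∧
  (∀ y, 0 ≤ y → MonotoneOn (fun x => f x y) (Set.Ici 0)) ∧
  (∀ y, 0 ≤ y → ConvexOn ℝ (Set.Ici 0) (fun x => f x y))

/-- class `C₀`: members of `C` vanishing when one argument is `0`. -/
def InClassC0 (f : ℝ → ℝ → ℝ) : Prop :=
  InClassC f ∧ ∀ x, 0 ≤ x → f x 0 = 0

/-- An edge is tight in `s` if both endpoints contribute `0` or their full budget. -/
def tightState (g : NCGame V) (s : V → V → ℝ) : Prop :=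
  ∀ u v, g.Adj u v → s u v = 0 ∨ s u v = g.B u

/-!
Measure every reward and utility by its excess over the state of zero effort, and let `D v` be the
excess utility of `v` in the pairwise equilibrium. Suppose that in a competing state `v` spends the
fraction `p` of its budget on the edge `vu`, and `u` the fraction `q`. By coordinate-convexity the
excess reward of the edge is at most its expectation when `v` and `u` independently put their whole
budgets on the edge with probabilities `p` and `q`. If `v` alone does so, the Nash condition bounds
the excess reward by `D v`; if both do, pairwise stability bounds it by
`max (D v) (D u) ≤ D v + D u`. So the expectation is at most `p * D v + q * D u`. The fractions of
each player add up to at most one and every edge is counted once for each endpoint, so summing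
gives the factor two.
-/

section CoordinateConvex

theorem le_bilinear_interpolation {E F : Type*} [AddCommGroup E] [Module ℝ E] [AddCommGroup F]
    [Module ℝ F] {S : Set E} {T : Set F} {f : E → F → ℝ}
    (hleft : ∀ y ∈ T, ConvexOn ℝ S fun x => f x y) (hright : ∀ x ∈ S, ConvexOn ℝ T (f x))
    {x x' : E} (hx : x ∈ S) (hx' : x' ∈ S) {y y' : F} (hy : y ∈ T) (hy' : y' ∈ T)
    {p p' q q' : ℝ} (hp : 0 ≤ p) (hp' : 0 ≤ p') (hpp' : p + p' = 1)
    (hq : 0 ≤ q) (hq' : 0 ≤ q') (hqq' : q + q' = 1) :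
    f (p • x + p' • x') (q • y + q' • y') ≤
      p * (q * f x y + q' * f x y') + p' * (q * f x' y + q' * f x' y') := by
  have hyT : q • y + q' • y' ∈ T := (hright x hx).1 hy hy' hq hq' hqq'
  calc f (p • x + p' • x') (q • y + q' • y')
      ≤ p * f x (q • y + q' • y') + p' * f x' (q • y + q' • y') :=
        (hleft _ hyT).2 hx hx' hp hp' hpp'
    _ ≤ p * (q * f x y + q' * f x y') + p' * (q * f x' y + q' * f x' y') := by
        gcongr
        · exact (hright x hx).2 hy hy' hq hq' hqq'
        · exact (hright x' hx').2 hy hy' hq hq' hqq'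

theorem InClassC.convexOn_right {f : ℝ → ℝ → ℝ} (hf : InClassC f) {x : ℝ} (hx : 0 ≤ x) :
    ConvexOn ℝ (Set.Ici 0) (f x) := by
  obtain ⟨-, hsymm, -, hconv⟩ := hf
  exact (hconv x hx).congr fun y _ => hsymm y x

theorem InClassC.map_mul_mul_le {f : ℝ → ℝ → ℝ} (hf : InClassC f) {x y p q : ℝ}
    (hx : 0 ≤ x) (hy : 0 ≤ y) (hp : 0 ≤ p) (hp1 : p ≤ 1) (hq : 0 ≤ q) (hq1 : q ≤ 1) :
    f (p * x) (q * y) ≤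
      p * (q * f x y + (1 - q) * f x 0) + (1 - p) * (q * f 0 y + (1 - q) * f 0 0) := by
  simpa using le_bilinear_interpolation (S := Set.Ici 0) (T := Set.Ici 0) hf.2.2.2
    (fun _ => hf.convexOn_right) hx Set.self_mem_Ici hy Set.self_mem_Ici
    hp (sub_nonneg.2 hp1) (add_sub_cancel p 1) hq (sub_nonneg.2 hq1) (add_sub_cancel q 1)

end CoordinateConvex

section Gain

variable {g : NCGame V} {u v : V} {x x' y y' : ℝ}

/-- The excess reward of the edge `(v, u)` over its reward at zero effort, when `v` contributes `x`
and `u` contributes `y`. Like `NCGame.f`, it is also defined on non-adjacent pairs. -/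
def NCGame.gain (g : NCGame V) (v u : V) (x y : ℝ) : ℝ :=
  g.f v u x y - g.f v u 0 0

theorem NCGame.gain_swap (g : NCGame V) (v u : V) (x y : ℝ) : g.gain u v y x = g.gain v u x y := by
  rw [gain, gain, g.f_comm u v, g.f_comm u v, g.f_symm v u y x]

theorem NCGame.f_le_f (hx : 0 ≤ x) (hy : 0 ≤ y) (hxx' : x ≤ x') (hyy' : y ≤ y') :
    g.f v u x y ≤ g.f v u x' y' :=
  calc g.f v u x y ≤ g.f v u x' y := g.f_mono v u y hy hx (hx.trans hxx') hxx'
    _ = g.f v u y x' := g.f_symm v u x' y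
    _ ≤ g.f v u y' x' := g.f_mono v u x' (hx.trans hxx') hy (hy.trans hyy') hyy'
    _ = g.f v u x' y' := g.f_symm v u y' x'

theorem NCGame.gain_le_gain (hx : 0 ≤ x) (hy : 0 ≤ y) (hxx' : x ≤ x') (hyy' : y ≤ y') :
    g.gain v u x y ≤ g.gain v u x' y' :=
  sub_le_sub_right (f_le_f hx hy hxx' hyy') _

theorem NCGame.gain_nonneg (hx : 0 ≤ x) (hy : 0 ≤ y) : 0 ≤ g.gain v u x y :=
  sub_nonneg.2 (f_le_f le_rfl le_rfl hx hy)

theorem NCGame.gain_mul_mul_le (hf : InClassC (g.f v u)) {p q : ℝ} (hx : 0 ≤ x) (hy : 0 ≤ y)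
    (hp : 0 ≤ p) (hp1 : p ≤ 1) (hq : 0 ≤ q) (hq1 : q ≤ 1) :
    g.gain v u (p * x) (q * y) ≤ p * q * g.gain v u x y + p * (1 - q) * g.gain v u x 0 +
      (1 - p) * q * g.gain v u 0 y := by
  have hinterp := hf.map_mul_mul_le hx hy hp hp1 hq hq1
  simp only [gain]
  linarith

end Gain

section Surplus

variable {g : NCGame V} {t : V → V → ℝ} {u v : V}

/-- The excess utility of player `v` in the state `t` over its utility when nobody makes any
effort. -/
noncomputable def surplus (g : NCGame V) (t : V → V → ℝ) (v : V) : ℝ :=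
  util g t v - util g 0 v

open Classical in
theorem surplus_eq_sum_gain (g : NCGame V) (t : V → V → ℝ) (v : V) :
    surplus g t v = ∑ u, if g.Adj v u then g.gain v u (t v u) (t u v) else 0 := by
  rw [surplus, util, util, ← sum_sub_distrib]
  refine sum_congr rfl fun u _ => ?_
  split_ifs
  · rfl
  · exact sub_zero 0

theorem sum_surplus (g : NCGame V) (t : V → V → ℝ) :
    ∑ v, surplus g t v = welfare g t - welfare g 0 :=
  sum_sub_distrib _ _

theorem surplus_nonneg (ht : ∀ v u, 0 ≤ t v u) : 0 ≤ surplus g t v := by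
  classical
  rw [surplus_eq_sum_gain]
  refine sum_nonneg fun u _ => ?_
  split_ifs
  exacts [NCGame.gain_nonneg (ht v u) (ht u v), le_rfl]

theorem NCGame.gain_le_surplus (ht : ∀ v u, 0 ≤ t v u) (hvu : g.Adj v u) :
    g.gain v u (t v u) (t u v) ≤ surplus g t v := by
  classical
  rw [surplus_eq_sum_gain, ← if_pos (c := g.Adj v u) (t := g.gain v u (t v u) (t u v)) hvu]
  refine single_le_sum (f := fun w => if g.Adj v w then g.gain v w (t v w) (t w v) else 0)
    (fun w _ => ?_) (mem_univ u)
  split_ifs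
  exacts [NCGame.gain_nonneg (ht v w) (ht w v), le_rfl]

theorem welfare_nonneg (ht : ∀ v u, 0 ≤ t v u) : 0 ≤ welfare g t := by
  refine sum_nonneg fun v _ => sum_nonneg fun u _ => ?_
  split_ifs
  exacts [g.f_nonneg v u _ _ (ht v u) (ht u v), le_rfl]

end Surplus

section Deviation

variable {g : NCGame V} {s : V → V → ℝ} {u v : V}

theorem NCGame.Adj.ne (hvu : g.Adj v u) : v ≠ u := by
  rintro rfl
  exact g.adj_irrefl v hvu

theorem validState.update_single (hs : validState g s) (hvu : g.Adj v u) {x : ℝ} (hx : 0 ≤ x)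
    (hxB : x ≤ g.B v) : validState g (Function.update s v (Pi.single u x)) := by
  obtain ⟨hnonneg, hsupp, hbudget⟩ := hs
  refine ⟨?_, ?_, ?_⟩
  · rw [Function.forall_update_iff s fun _ t => ∀ w, 0 ≤ t w]
    have hsingle : 0 ≤ (Pi.single u x : V → ℝ) := Pi.single_nonneg.2 hx
    exact ⟨hsingle, fun a _ => hnonneg a⟩
  · rw [Function.forall_update_iff s fun a t => ∀ w, ¬ g.Adj a w → t w = 0]
    refine ⟨fun w hvw => ?_, fun a _ => hsupp a⟩
    have hwu : w ≠ u := fun h => hvw (h ▸ hvu)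
    simp [hwu]
  · rw [Function.forall_update_iff s fun a t => ∑ w, t w ≤ g.B a]
    exact ⟨by simpa using hxB, fun a _ => hbudget a⟩

theorem IsNashEq.gain_le_surplus (hs : IsNashEq g s) (hvu : g.Adj v u) :
    g.gain v u (g.B v) (s u v) ≤ surplus g s v := by
  set s' := Function.update s v (Pi.single u (g.B v)) with hs'
  have hvalid : validState g s' := hs.1.update_single hvu (g.B_nonneg v) le_rfl
  calc g.gain v u (g.B v) (s u v) = g.gain v u (s' v u) (s' u v) := by
        simp [hs', hvu.ne.symm]
    _ ≤ surplus g s' v := NCGame.gain_le_surplus hvalid.1 hvu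
    _ ≤ surplus g s v := sub_le_sub_right (hs.2 v _ hvalid) _

theorem IsPairwiseEq.gain_le_max_surplus (hs : IsPairwiseEq g s) (hvu : g.Adj v u) :
    g.gain v u (g.B v) (g.B u) ≤ max (surplus g s v) (surplus g s u) := by
  have huv : g.Adj u v := g.adj_symm v u hvu
  set s' := Function.update (Function.update s v (Pi.single u (g.B v))) u (Pi.single v (g.B u))
    with hs'
  have hvalid : validState g s' :=
    (hs.1.1.update_single hvu (g.B_nonneg v) le_rfl).update_single huv (g.B_nonneg u) le_rfl
  have hv_effort : s' v u = g.B v := by simp [hs', hvu.ne]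
  have hu_effort : s' u v = g.B u := by simp [hs']
  have hv : g.gain v u (g.B v) (g.B u) ≤ surplus g s' v := by
    simpa only [hv_effort, hu_effort] using NCGame.gain_le_surplus hvalid.1 hvu
  have hu : g.gain v u (g.B v) (g.B u) ≤ surplus g s' u := by
    simpa only [hv_effort, hu_effort, g.gain_swap v u] using NCGame.gain_le_surplus hvalid.1 huv
  by_contra! hlt
  obtain ⟨hlt_v, hlt_u⟩ := max_lt_iff.1 hlt
  exact hs.2 v u _ _ hvu.ne hvalid
    ⟨(sub_lt_sub_iff_right _).1 (hlt_v.trans_le hv), (sub_lt_sub_iff_right _).1 (hlt_u.trans_le hu)⟩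

end Deviation

section Share

variable {g : NCGame V} {t : V → V → ℝ}

/-- The fraction of its budget that player `v` spends on the edge `(v, u)`. For a player without
budget this is `0`, which is consistent with such a player making no effort in a valid state. -/
noncomputable def share (g : NCGame V) (t : V → V → ℝ) (v u : V) : ℝ :=
  t v u / g.B v

theorem share_nonneg (ht : validState g t) (v u : V) : 0 ≤ share g t v u :=
  div_nonneg (ht.1 v u) (g.B_nonneg v)

theorem sum_share_le_one (ht : validState g t) (v : V) : ∑ u, share g t v u ≤ 1 := by
  simp only [share, ← sum_div]
  exact div_le_one_of_le₀ (ht.2.2 v) (g.B_nonneg v)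

theorem share_le_one (ht : validState g t) (v u : V) : share g t v u ≤ 1 :=
  (single_le_sum (fun w _ => share_nonneg ht v w) (mem_univ u)).trans (sum_share_le_one ht v)

theorem share_mul_budget (ht : validState g t) (v u : V) : share g t v u * g.B v = t v u := by
  refine div_mul_cancel_of_imp fun hB => le_antisymm ?_ (ht.1 v u)
  calc t v u ≤ ∑ w, t v w := single_le_sum (fun w _ => ht.1 v w) (mem_univ u)
    _ ≤ g.B v := ht.2.2 v
    _ = 0 := hB

end Share

section PairwiseEq

variable {g : NCGame V} {s t : V → V → ℝ}

theorem IsPairwiseEq.gain_le_share_mul_surplus (hs : IsPairwiseEq g s) (ht : validState g t)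
    {u v : V} (hvu : g.Adj v u) (hf : InClassC (g.f v u)) :
    g.gain v u (t v u) (t u v) ≤
      share g t v u * surplus g s v + share g t u v * surplus g s u := by
  have hBv := g.B_nonneg v
  have hBu := g.B_nonneg u
  have hs0 := hs.1.1.1
  have hv_alone : g.gain v u (g.B v) 0 ≤ surplus g s v :=
    (NCGame.gain_le_gain hBv le_rfl le_rfl (hs0 u v)).trans (hs.1.gain_le_surplus hvu)
  have hu_alone : g.gain v u 0 (g.B u) ≤ surplus g s u := by
    rw [← g.gain_swap]
    exact (NCGame.gain_le_gain hBu le_rfl le_rfl (hs0 v u)).trans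
      (hs.1.gain_le_surplus (g.adj_symm v u hvu))
  have hboth : g.gain v u (g.B v) (g.B u) ≤ surplus g s v + surplus g s u :=
    (hs.gain_le_max_surplus hvu).trans
      (max_le_add_of_nonneg (surplus_nonneg hs0) (surplus_nonneg hs0))
  rw [← share_mul_budget ht v u, ← share_mul_budget ht u v]
  set p := share g t v u
  set q := share g t u v
  have hp : 0 ≤ p := share_nonneg ht v u
  have hp1 : p ≤ 1 := share_le_one ht v u
  have hq : 0 ≤ q := share_nonneg ht u v
  have hq1 : q ≤ 1 := share_le_one ht u v
  calc g.gain v u (p * g.B v) (q * g.B u)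
      ≤ p * q * g.gain v u (g.B v) (g.B u) + p * (1 - q) * g.gain v u (g.B v) 0 +
          (1 - p) * q * g.gain v u 0 (g.B u) :=
        NCGame.gain_mul_mul_le hf hBv hBu hp hp1 hq hq1
    _ ≤ p * q * (surplus g s v + surplus g s u) + p * (1 - q) * surplus g s v +
          (1 - p) * q * surplus g s u := by
        gcongr
    _ = p * surplus g s v + q * surplus g s u := by ring

theorem IsPairwiseEq.surplus_le_sum_share_mul_surplus (hs : IsPairwiseEq g s)
    (hC : ∀ u v, g.Adj u v → InClassC (g.f u v)) (ht : validState g t) (v : V) :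
    surplus g t v ≤
      ∑ u, (share g t v u * surplus g s v + share g t u v * surplus g s u) := by
  classical
  have hD : ∀ w, 0 ≤ surplus g s w := fun w => surplus_nonneg hs.1.1.1
  rw [surplus_eq_sum_gain]
  refine sum_le_sum fun u _ => ?_
  split_ifs with hvu
  · exact hs.gain_le_share_mul_surplus ht hvu (hC v u hvu)
  · exact add_nonneg (mul_nonneg (share_nonneg ht v u) (hD v))
      (mul_nonneg (share_nonneg ht u v) (hD u))

theorem IsPairwiseEq.sum_surplus_le_two_mul (hs : IsPairwiseEq g s)
    (hC : ∀ u v, g.Adj u v → InClassC (g.f u v)) (ht : validState g t) :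
    ∑ v, surplus g t v ≤ 2 * ∑ v, surplus g s v := by
  calc ∑ v, surplus g t v
      ≤ ∑ v, ∑ u, (share g t v u * surplus g s v + share g t u v * surplus g s u) :=
        sum_le_sum fun v _ => hs.surplus_le_sum_share_mul_surplus hC ht v
    _ = 2 * ∑ v, (∑ u, share g t v u) * surplus g s v := by
        simp only [sum_add_distrib, sum_mul]
        rw [sum_comm (f := fun v u => share g t u v * surplus g s u), two_mul]
    _ ≤ 2 * ∑ v, surplus g s v := by
        gcongr with v
        exact mul_le_of_le_one_left (surplus_nonneg hs.1.1.1) (sum_share_le_one ht v)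

end PairwiseEq

/-- with all reward functions in class `C`, every pairwise
equilibrium achieves at least half of the social welfare of any state:
the price of anarchy for pairwise equilibria is at most 2. -/
theorem poa_classC_le_two (g : NCGame V)
    (hC : ∀ u v, g.Adj u v → InClassC (g.f u v))
    (s : V → V → ℝ) (hs : IsPairwiseEq g s)
    (sStar : V → V → ℝ) (hStar : validState g sStar) :
    welfare g sStar ≤ 2 * welfare g s := by
  have hsurplus := hs.sum_surplus_le_two_mul hC hStar
  rw [sum_surplus, sum_surplus] at hsurplus
  have hzero : 0 ≤ welfare g 0 := welfare_nonneg fun _ _ => le_rfl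
  linarith
end

section
/- If every reward function f_e of a network contribution game belongs to class C_0, then a pairwise equilibrium exists. Concretely, let M be a greedy matching obtained by considering the edges in nonincreasing order of c_e = f_e(B_u, B_v) (for e = (u,v)) and adding each edge whenever the result is still a matching; then the state in which every player matched by M places its entire budget on its matching edge, and every unmatched player places zero effort on all its edges, is a pairwise equilibrium. -/
open Finset

variable {V : Type} [Fintype V] [DecidableEq V]

/-- maximum possible reward of an edge: both endpoints contribute their full budget -/
noncomputable def maxReward (g : NCGame V) (e : V × V) : ℝ :=
  g.f e.1 e.2 (g.B e.1) (g.B e.2)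

/-- one step of the greedy matching: add the edge `e` if it is disjoint
from all previously chosen edges. -/
def greedyStep (acc : List (V × V)) (e : V × V) : List (V × V) :=
  if ∀ e' ∈ acc, e'.1 ≠ e.1 ∧ e'.1 ≠ e.2 ∧ e'.2 ≠ e.1 ∧ e'.2 ≠ e.2
  then acc ++ [e] else acc

/-- the greedy matching obtained by scanning the list of edges `L`
(sorted nonincreasingly by maximum reward) in order. -/
def greedyMatching (L : List (V × V)) : List (V × V) := L.foldl greedyStep []

/-- the state where every player matched by `M` puts its whole budget on its
matching edge, and all other efforts are `0`. -/
noncomputable def matchedState (g : NCGame V) (M : List (V × V)) : V → V → ℝ :=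
  fun v u => if (v, u) ∈ M ∨ (u, v) ∈ M then g.B v else 0

/-!
Convexity together with `f 0 y = 0` gives `f (t * x) y ≤ t * f x y` for `t ∈ [0, 1]`, so the utility
of a player is at most a weighted average of the rewards it would collect by putting its whole
budget on a single edge. Hence, against opponents whose efforts are unchanged, a player cannot beat
its matching edge; a deviating coalition can only help its members through edges inside it. Greedy
selection makes every edge `e` meet a matched edge worth at least `c_e`, so some endpoint of `e`
already earns `c_e`. In any coalition, a member of largest current utility therefore earns at least
`c_e` for each of its edges `e` inside the coalition, and cannot strictly improve. Thus the greedy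
state is even a strong equilibrium.
-/

section Matching

variable {α : Type*}

/-- Two edges, given as ordered pairs, have no endpoint in common. The order of the four clauses is
that of the test in `greedyStep`. -/
def EdgeDisjoint (e e' : α × α) : Prop :=
  e.1 ≠ e'.1 ∧ e.1 ≠ e'.2 ∧ e.2 ≠ e'.1 ∧ e.2 ≠ e'.2

lemma not_edgeDisjoint_self (e : α × α) : ¬ EdgeDisjoint e e := fun h => h.1 rfl

lemma EdgeDisjoint.symm {e e' : α × α} (h : EdgeDisjoint e e') : EdgeDisjoint e' e :=
  ⟨h.1.symm, h.2.2.1.symm, h.2.1.symm, h.2.2.2.symm⟩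

lemma EdgeDisjoint.swap_right {e e' : α × α} (h : EdgeDisjoint e e') : EdgeDisjoint e e'.swap :=
  ⟨h.2.1, h.1, h.2.2.2, h.2.2.1⟩

/-- `u` and `v` are joined by an edge of `M`, in either orientation. -/
def MatchedBy (M : List (α × α)) (u v : α) : Prop := (u, v) ∈ M ∨ (v, u) ∈ M

lemma MatchedBy.symm {M : List (α × α)} {u v : α} (h : MatchedBy M u v) : MatchedBy M v u :=
  Or.symm h

lemma MatchedBy.partner_unique {M : List (α × α)} (hM : M.Pairwise EdgeDisjoint) {u v w : α}
    (hv : MatchedBy M u v) (hw : MatchedBy M u w) : v = w := by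
  have eq_of_meet {e e' : α × α} (he : e ∈ M) (he' : e' ∈ M) (hmeet : ¬ EdgeDisjoint e e') :
      e = e' := by
    have : Std.Symm (EdgeDisjoint (α := α)) := ⟨fun _ _ => EdgeDisjoint.symm⟩
    by_contra hne
    exact hmeet (hM.forall he he' hne)
  rcases hv with hv | hv <;> rcases hw with hw | hw <;>
    have := eq_of_meet hv hw (by simp [EdgeDisjoint]) <;> simp_all

end Matching

section Greedy

lemma subset_greedyStep (acc : List (V × V)) (e : V × V) : acc ⊆ greedyStep acc e := by
  unfold greedyStep
  split_ifs <;> simp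

lemma mem_or_eq_of_mem_greedyStep {acc : List (V × V)} {e a : V × V}
    (ha : a ∈ greedyStep acc e) : a ∈ acc ∨ a = e := by
  unfold greedyStep at ha
  split_ifs at ha
  · simpa using ha
  · exact Or.inl ha

lemma pairwise_edgeDisjoint_greedyStep {acc : List (V × V)} (hacc : acc.Pairwise EdgeDisjoint)
    (e : V × V) : (greedyStep acc e).Pairwise EdgeDisjoint := by
  unfold greedyStep
  split_ifs with hdisj
  · exact List.pairwise_append.2
      ⟨hacc, List.pairwise_singleton _ _, by simpa [EdgeDisjoint] using hdisj⟩
  · exact hacc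

lemma exists_mem_greedyStep_not_edgeDisjoint (acc : List (V × V)) (e : V × V) :
    ∃ a ∈ greedyStep acc e, ¬ EdgeDisjoint a e := by
  unfold greedyStep
  split_ifs with hdisj
  · exact ⟨e, by simp, not_edgeDisjoint_self e⟩
  · simpa only [EdgeDisjoint, not_forall, exists_prop] using hdisj

lemma subset_foldl_greedyStep (L acc : List (V × V)) : acc ⊆ L.foldl greedyStep acc :=
  L.foldlRecOn (motive := (acc ⊆ ·)) greedyStep (List.Subset.refl acc)
    fun b hb e _ => List.Subset.trans hb (subset_greedyStep b e)

lemma greedyMatching_subset (L : List (V × V)) : greedyMatching L ⊆ L :=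
  L.foldlRecOn (motive := (· ⊆ L)) greedyStep (List.nil_subset L) fun _ hb _ he _ ha =>
    (mem_or_eq_of_mem_greedyStep ha).elim (fun h => hb h) (fun h => h ▸ he)

lemma pairwise_edgeDisjoint_greedyMatching (L : List (V × V)) :
    (greedyMatching L).Pairwise EdgeDisjoint :=
  L.foldlRecOn greedyStep List.Pairwise.nil fun _ hb e _ => pairwise_edgeDisjoint_greedyStep hb e

lemma exists_mem_greedyMatching_not_edgeDisjoint {r : V × V → V × V → Prop} [Std.Refl r]
    {L : List (V × V)} (hL : L.Pairwise r) {e : V × V} (he : e ∈ L) :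
    ∃ a ∈ greedyMatching L, ¬ EdgeDisjoint a e ∧ r a e := by
  obtain ⟨L₁, L₂, rfl⟩ := List.append_of_mem he
  obtain ⟨a, ha, hmeet⟩ := exists_mem_greedyStep_not_edgeDisjoint (greedyMatching L₁) e
  have ha_final : a ∈ greedyMatching (L₁ ++ e :: L₂) := by
    rw [greedyMatching, List.foldl_append, List.foldl_cons]
    exact subset_foldl_greedyStep L₂ _ ha
  refine ⟨a, ha_final, hmeet, ?_⟩
  rcases mem_or_eq_of_mem_greedyStep ha with ha_earlier | rfl
  · exact (List.pairwise_append.1 hL).2.2 a (greedyMatching_subset L₁ ha_earlier) e (by simp)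
  · exact refl a

end Greedy

/-- `f` is star-shaped in its first argument: scaling that argument down by `t ∈ [0, 1]` scales the
value down by at least the factor `t`. This is the form in which convexity enters the utility
bound. -/
def IsStarShaped (f : ℝ → ℝ → ℝ) : Prop :=
  ∀ ⦃t x y : ℝ⦄, 0 ≤ t → t ≤ 1 → 0 ≤ x → 0 ≤ y → f (t * x) y ≤ t * f x y

lemma InClassC0.isStarShaped {f : ℝ → ℝ → ℝ} (hf : InClassC0 f) : IsStarShaped f := by
  obtain ⟨⟨-, hsymm, -, hconvex⟩, hzero⟩ := hf
  intro t x y ht ht1 hx hy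
  have hzero_left : f 0 y = 0 := by rw [hsymm, hzero y hy]
  simpa [hzero_left] using
    (hconvex y hy).2 (Set.mem_Ici.2 hx) Set.self_mem_Ici ht (sub_nonneg.2 ht1) (by ring)

lemma IsStarShaped.apply_zero_left_nonpos {f : ℝ → ℝ → ℝ} (hf : IsStarShaped f) {y : ℝ}
    (hy : 0 ≤ y) : f 0 y ≤ 0 := by
  simpa using hf le_rfl zero_le_one le_rfl hy

section Utility

variable {g : NCGame V} {s : V → V → ℝ} {u v : V}

lemma maxReward_swap (g : NCGame V) (e : V × V) : maxReward g e.swap = maxReward g e := by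
  simp only [maxReward, Prod.fst_swap, Prod.snd_swap]
  rw [g.f_comm, g.f_symm]

lemma validState.effort_le_budget (hs : validState g s) (u v : V) : s u v ≤ g.B u :=
  (single_le_sum (fun w _ => hs.1 u w) (mem_univ v)).trans (hs.2.2 u)

lemma validState.reward_le_maxReward (hs : validState g s) (u v : V) :
    g.f u v (g.B u) (s v u) ≤ maxReward g (u, v) := by
  rw [maxReward, g.f_symm, g.f_symm u v (g.B u)]
  exact g.f_mono u v _ (g.B_nonneg u) (hs.1 v u) (g.B_nonneg v) (hs.effort_le_budget v u)

open Classical in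
lemma util_summand_nonneg (g : NCGame V) (hs : ∀ v u, 0 ≤ s v u) (u v : V) :
    0 ≤ if g.Adj u v then g.f u v (s u v) (s v u) else 0 := by
  split_ifs
  · exact g.f_nonneg _ _ _ _ (hs _ _) (hs _ _)
  · exact le_rfl

lemma util_nonneg (g : NCGame V) (hs : ∀ v u, 0 ≤ s v u) (u : V) : 0 ≤ util g s u :=
  sum_nonneg fun v _ => util_summand_nonneg g hs u v

lemma reward_le_util (hs : ∀ v u, 0 ≤ s v u) (huv : g.Adj u v) :
    g.f u v (s u v) (s v u) ≤ util g s u := by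
  classical
  simpa [util, huv] using single_le_sum (fun w _ => util_summand_nonneg g hs u w) (mem_univ v)

lemma util_le_of_forall_full_budget_le (hf : ∀ v, g.Adj u v → IsStarShaped (g.f u v))
    (hs : validState g s) {K : ℝ} (hK : 0 ≤ K)
    (h : ∀ v, g.Adj u v → g.f u v (g.B u) (s v u) ≤ K) : util g s u ≤ K := by
  have hB := g.B_nonneg u
  have hshare (v : V) : 0 ≤ s u v / g.B u := div_nonneg (hs.1 u v) hB
  have hsplit (v : V) : s u v / g.B u * g.B u = s u v :=
    div_mul_cancel_of_imp fun h0 => le_antisymm (h0 ▸ hs.effort_le_budget u v) (hs.1 u v)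
  have hreward (v : V) (huv : g.Adj u v) : g.f u v (s u v) (s v u) ≤ s u v / g.B u * K :=
    calc g.f u v (s u v) (s v u)
        = g.f u v (s u v / g.B u * g.B u) (s v u) := by rw [hsplit]
      _ ≤ s u v / g.B u * g.f u v (g.B u) (s v u) :=
          hf v huv (hshare v) (div_le_one_of_le₀ (hs.effort_le_budget u v) hB) hB (hs.1 v u)
      _ ≤ s u v / g.B u * K := mul_le_mul_of_nonneg_left (h v huv) (hshare v)
  calc util g s u
      ≤ ∑ v, s u v / g.B u * K := sum_le_sum fun v _ => by
        split_ifs with huv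
        · exact hreward v huv
        · exact mul_nonneg (hshare v) hK
    _ = (∑ v, s u v) / g.B u * K := by rw [← sum_mul, sum_div]
    _ ≤ K := mul_le_of_le_one_left hK (div_le_one_of_le₀ (hs.2.2 u) hB)

end Utility

lemma IsStrongEq.isPairwiseEq {g : NCGame V} {s : V → V → ℝ} (hs : IsStrongEq g s) :
    IsPairwiseEq g s := by
  obtain ⟨hvalid, hcoalition⟩ := hs
  refine ⟨⟨hvalid, fun v t ht => ?_⟩, fun u v tu tv _ ht => ?_⟩
  · simpa using hcoalition {v} _ (singleton_nonempty v) ht fun w hw =>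
      Function.update_of_ne (by simpa using hw) _ _
  · have hunchanged (w : V) (hw : w ∉ ({u, v} : Finset V)) :
        Function.update (Function.update s u tu) v tv w = s w := by
      simp only [mem_insert, mem_singleton, not_or] at hw
      rw [Function.update_of_ne hw.2, Function.update_of_ne hw.1]
    have := hcoalition {u, v} _ (insert_nonempty u {v}) ht hunchanged
    rintro ⟨hu, hv⟩
    simp only [mem_insert, mem_singleton, exists_eq_or_imp, exists_eq_left] at this
    exact this.elim hu.not_ge hv.not_ge

section MatchedState

variable {g : NCGame V} {M : List (V × V)} {u v : V}

lemma matchedState_of_matchedBy (g : NCGame V) (h : MatchedBy M u v) :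
    matchedState g M u v = g.B u :=
  if_pos h

lemma matchedState_of_not_matchedBy (g : NCGame V) (h : ¬ MatchedBy M u v) :
    matchedState g M u v = 0 :=
  if_neg h

lemma matchedState_nonneg (g : NCGame V) (M : List (V × V)) (u v : V) :
    0 ≤ matchedState g M u v := by
  unfold matchedState
  split_ifs
  · exact g.B_nonneg u
  · exact le_rfl

lemma sum_matchedState_le (g : NCGame V) (hM : M.Pairwise EdgeDisjoint) (u : V) :
    ∑ v, matchedState g M u v ≤ g.B u := by
  by_cases hu : ∃ v, MatchedBy M u v
  · obtain ⟨v, huv⟩ := hu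
    rw [Fintype.sum_eq_single v fun w hw =>
      matchedState_of_not_matchedBy g fun huw => hw (huw.partner_unique hM huv)]
    exact (matchedState_of_matchedBy g huv).le
  · rw [Fintype.sum_eq_zero _ fun v => matchedState_of_not_matchedBy g fun huv => hu ⟨v, huv⟩]
    exact g.B_nonneg u

/-- `M` is a matching of `g` that is stable when both endpoints value an edge at its maximum reward:
every edge of `g` meets an edge of `M` worth at least as much. An edge of `M` meets itself. -/
structure IsStableMatching (g : NCGame V) (M : List (V × V)) : Prop where
  adj : ∀ e ∈ M, g.Adj e.1 e.2
  pairwise_edgeDisjoint : M.Pairwise EdgeDisjoint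
  exists_dominating : ∀ u v, g.Adj u v →
    ∃ e ∈ M, ¬ EdgeDisjoint e (u, v) ∧ maxReward g (u, v) ≤ maxReward g e

lemma isStableMatching_greedyMatching {L : List (V × V)} (hLadj : ∀ e ∈ L, g.Adj e.1 e.2)
    (hLcover : ∀ u v, g.Adj u v → (u, v) ∈ L ∨ (v, u) ∈ L)
    (hLsorted : L.Pairwise fun e e' => maxReward g e' ≤ maxReward g e) :
    IsStableMatching g (greedyMatching L) where
  adj e he := hLadj e (greedyMatching_subset L he)
  pairwise_edgeDisjoint := pairwise_edgeDisjoint_greedyMatching L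
  exists_dominating u v huv := by
    have : Std.Refl fun e e' => maxReward g e' ≤ maxReward g e := ⟨fun _ => le_rfl⟩
    rcases hLcover u v huv with he | he
    · exact exists_mem_greedyMatching_not_edgeDisjoint hLsorted he
    · obtain ⟨a, ha, hmeet, hle⟩ := exists_mem_greedyMatching_not_edgeDisjoint hLsorted he
      exact ⟨a, ha, fun hdisj => hmeet hdisj.swap_right, (maxReward_swap g (v, u)).trans_le hle⟩

namespace IsStableMatching

lemma adj_of_matchedBy (hM : IsStableMatching g M) (h : MatchedBy M u v) : g.Adj u v :=
  h.elim (hM.adj _) fun h => g.adj_symm _ _ (hM.adj _ h)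

lemma validState_matchedState (hM : IsStableMatching g M) : validState g (matchedState g M) :=
  ⟨matchedState_nonneg g M,
    fun _ _ hnadj => matchedState_of_not_matchedBy g fun h => hnadj (hM.adj_of_matchedBy h),
    sum_matchedState_le g hM.pairwise_edgeDisjoint⟩

lemma maxReward_le_util_of_matchedBy (hM : IsStableMatching g M) (h : MatchedBy M u v) :
    maxReward g (u, v) ≤ util g (matchedState g M) u := by
  simpa only [maxReward, matchedState_of_matchedBy g h, matchedState_of_matchedBy g h.symm] using
    reward_le_util (matchedState_nonneg g M) (hM.adj_of_matchedBy h)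

lemma maxReward_le_max_util (hM : IsStableMatching g M) (huv : g.Adj u v) :
    maxReward g (u, v) ≤ max (util g (matchedState g M) u) (util g (matchedState g M) v) := by
  obtain ⟨⟨a, b⟩, hab, hmeet, hle⟩ := hM.exists_dominating u v huv
  have ha := hle.trans (hM.maxReward_le_util_of_matchedBy (Or.inl hab))
  have hb := (hle.trans_eq (maxReward_swap g (a, b)).symm).trans
    (hM.maxReward_le_util_of_matchedBy (Or.inr hab))
  have hcommon : a = u ∨ a = v ∨ b = u ∨ b = v := by
    simp only [EdgeDisjoint] at hmeet
    tauto
  rcases hcommon with rfl | rfl | rfl | rfl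
  exacts [le_max_of_le_left ha, le_max_of_le_right ha, le_max_of_le_left hb, le_max_of_le_right hb]

lemma full_budget_reward_le_util (hM : IsStableMatching g M) (hf : IsStarShaped (g.f u v)) :
    g.f u v (g.B u) (matchedState g M v u) ≤ util g (matchedState g M) u := by
  by_cases h : MatchedBy M u v
  · rw [matchedState_of_matchedBy g h.symm]
    exact hM.maxReward_le_util_of_matchedBy h
  · rw [matchedState_of_not_matchedBy g fun h' => h h'.symm, g.f_symm]
    exact (hf.apply_zero_left_nonpos (g.B_nonneg u)).trans
      (util_nonneg g (matchedState_nonneg g M) u)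

theorem isStrongEq_matchedState (hM : IsStableMatching g M)
    (hf : ∀ u v, g.Adj u v → IsStarShaped (g.f u v)) : IsStrongEq g (matchedState g M) := by
  refine ⟨hM.validState_matchedState, fun C s' hC hs' hunchanged => ?_⟩
  obtain ⟨u, huC, hmax⟩ := C.exists_max_image (util g (matchedState g M)) hC
  refine ⟨u, huC, util_le_of_forall_full_budget_le (hf u) hs'
    (util_nonneg g (matchedState_nonneg g M) u) fun v huv => ?_⟩
  by_cases hvC : v ∈ C
  · calc g.f u v (g.B u) (s' v u)
        ≤ maxReward g (u, v) := hs'.reward_le_maxReward u v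
      _ ≤ max (util g (matchedState g M) u) (util g (matchedState g M) v) :=
          hM.maxReward_le_max_util huv
      _ = util g (matchedState g M) u := max_eq_left (hmax v hvC)
  · rw [hunchanged v hvC]
    exact hM.full_budget_reward_le_util (hf u v huv)

end IsStableMatching

end MatchedState

theorem classC0_pairwise_exists_general (g : NCGame V)
    (hf : ∀ u v, g.Adj u v → IsStarShaped (g.f u v))
    (L : List (V × V))
    (hLadj : ∀ e ∈ L, g.Adj e.1 e.2)
    (hLcover : ∀ u v, g.Adj u v → (u, v) ∈ L ∨ (v, u) ∈ L)
    (hLsorted : L.Pairwise fun e e' => maxReward g e' ≤ maxReward g e) :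
    IsStrongEq g (matchedState g (greedyMatching L)) :=
  (isStableMatching_greedyMatching hLadj hLcover hLsorted).isStrongEq_matchedState hf

/-- if all reward functions lie in class `C₀`, a pairwise
equilibrium exists; concretely the greedy-matching state is one. -/
theorem classC0_pairwise_exists (g : NCGame V)
    (hC : ∀ u v, g.Adj u v → InClassC0 (g.f u v))
    (L : List (V × V))
    (hLadj : ∀ e ∈ L, g.Adj e.1 e.2)
    (hLcover : ∀ u v, g.Adj u v → (u, v) ∈ L ∨ (v, u) ∈ L)
    (hLnodup : L.Pairwise fun e e' => e ≠ e' ∧ e ≠ (e'.2, e'.1))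
    (hLsorted : L.Pairwise fun e e' => maxReward g e' ≤ maxReward g e) :
    (∃ s, IsPairwiseEq g s) ∧
    IsPairwiseEq g (matchedState g (greedyMatching L)) := by
  have h := (classC0_pairwise_exists_general g (fun u v huv => (hC u v huv).isStarShaped)
    L hLadj hLcover hLsorted).isPairwiseEq
  exact ⟨⟨_, h⟩, h⟩
end

section
/- Suppose every reward function of a network contribution game has the form f_e(x,y) = c_e·(x+y) with a constant c_e > 0. Then a state is a Nash equilibrium if and only if it is a social optimum; equivalently, the states stable under unilateral deviations are exactly the states in which every player (with at least one incident edge) spends its entire budget and places effort only on incident edges e maximizing c_e. Consequently, every pairwise equilibrium is a social optimum, so the price of anarchy for pairwise equilibria in such games is 1. -/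
open Finset

variable {V : Type} [Fintype V] [DecidableEq V]

/-! With rewards `c_e (x + y)` each unit of effort that `v` spends on an edge `e` pays `c_e` to `v`
and `c_e` to the other endpoint, whatever everybody else does. Hence, up to a term `v` does not
control, the utility of `v` is the linear function `c v ⬝ᵥ s v` of its own strategy, and the welfare
is twice the sum of these functions. Both Nash equilibria and social optima are therefore the states
in which every player maximizes its own linear function over its own strategy set. That is a linear
program over a scaled simplex, solved exactly by spending the whole budget on the edges of largest
weight. -/

section Separable

variable {ι β : Type*} {α : ι → Type*} [Fintype ι] [AddCommMonoid β] [PartialOrder β]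
  [IsOrderedCancelAddMonoid β]

theorem isMaxOn_sum_pi_iff {S : ∀ i, Set (α i)} {F : ∀ i, α i → β} {x : ∀ i, α i}
    (hx : x ∈ Set.univ.pi S) :
    IsMaxOn (fun y => ∑ i, F i (y i)) (Set.univ.pi S) x ↔ ∀ i, IsMaxOn (F i) (S i) (x i) := by
  classical
  constructor
  · intro hmax i t ht
    have hupdate : Function.update x i t ∈ Set.univ.pi S :=
      (Set.update_mem_pi_iff_of_mem hx).2 fun _ => ht
    have hsum : ∑ j, F j (Function.update x i t j) ≤ ∑ j, F j (x j) := hmax hupdate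
    have hrest : ∑ j ∈ univ.erase i, F j (Function.update x i t j) =
        ∑ j ∈ univ.erase i, F j (x j) :=
      sum_congr rfl fun j hj => by rw [Function.update_of_ne (ne_of_mem_erase hj)]
    rw [← add_sum_erase _ _ (mem_univ i), ← add_sum_erase _ (fun j => F j (x j)) (mem_univ i),
      hrest, Function.update_self] at hsum
    exact le_of_add_le_add_right hsum
  · exact fun hmax y hy => sum_le_sum fun i _ => hmax i (hy i trivial)

end Separable

section DotProduct

theorem mul_le_mul_right_of_ne_zero_imp_le {R : Type*} [MulZeroClass R] [Preorder R] [MulPosMono R]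
    {x y z : R} (hz : 0 ≤ z) (hxy : z ≠ 0 → x ≤ y) : x * z ≤ y * z := by
  rcases eq_or_ne z 0 with rfl | hz₀
  · rw [mul_zero, mul_zero]
  · exact mul_le_mul_of_nonneg_right (hxy hz₀) hz

variable {ι R : Type*} [Fintype ι] [Semiring R]

theorem dotProduct_le_mul_sum [PartialOrder R] [IsOrderedRing R] {a t : ι → R} {M : R}
    (ht : ∀ i, 0 ≤ t i) (hM : ∀ i, t i ≠ 0 → a i ≤ M) : a ⬝ᵥ t ≤ M * ∑ i, t i := by
  rw [mul_sum]
  exact sum_le_sum fun i _ => mul_le_mul_right_of_ne_zero_imp_le (ht i) (hM i)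

variable [LinearOrder R] [IsStrictOrderedRing R] {a t : ι → R} {b M : R}

theorem dotProduct_eq_mul_sum_iff (ht : ∀ i, 0 ≤ t i) (hM : ∀ i, t i ≠ 0 → a i ≤ M) :
    a ⬝ᵥ t = M * ∑ i, t i ↔ ∀ i, t i ≠ 0 → a i = M := by
  rw [mul_sum, dotProduct,
    sum_eq_sum_iff_of_le fun i _ => mul_le_mul_right_of_ne_zero_imp_le (ht i) (hM i)]
  constructor
  · intro h i hti
    have hpos : 0 < t i := (ht i).lt_of_ne' hti
    exact (hM i hti).antisymm (le_of_mul_le_mul_right (h i (mem_univ i)).ge hpos)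
  · intro h i _
    rcases eq_or_ne (t i) 0 with hti | hti
    · rw [hti, mul_zero, mul_zero]
    · rw [h i hti]

theorem dotProduct_eq_mul_iff_of_sum_le (ht : ∀ i, 0 ≤ t i) (hb : ∑ i, t i ≤ b)
    (hM : ∀ i, t i ≠ 0 → a i ≤ M) (hMpos : 0 < M) :
    a ⬝ᵥ t = M * b ↔ ∑ i, t i = b ∧ ∀ i, t i ≠ 0 → a i = M := by
  rw [← dotProduct_eq_mul_sum_iff ht hM]
  constructor
  · intro h
    have hsum : ∑ i, t i = b :=
      hb.antisymm (le_of_mul_le_mul_left (h ▸ dotProduct_le_mul_sum ht hM) hMpos)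
    exact ⟨hsum, hsum ▸ h⟩
  · rintro ⟨rfl, h⟩
    exact h

end DotProduct

/-- The ways of distributing at most the budget `b` over the items in `A`: nonnegative vectors
supported on `A` with sum at most `b`. These are the strategies of a player with budget `b` and set
`A` of neighbours. -/
def budgetSet {ι R : Type*} [Fintype ι] [AddCommMonoid R] [LE R] (A : Set ι) (b : R) :
    Set (ι → R) :=
  {t | (∀ i, 0 ≤ t i) ∧ (∀ i, i ∉ A → t i = 0) ∧ ∑ i, t i ≤ b}

section BudgetSet

variable {ι R : Type*} [Fintype ι] {A : Set ι} {b : R} {a t : ι → R} {i : ι}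

theorem mem_of_mem_budgetSet_of_ne_zero [AddCommMonoid R] [LE R] (ht : t ∈ budgetSet A b)
    (hi : t i ≠ 0) : i ∈ A :=
  not_imp_comm.1 (ht.2.1 i) hi

theorem single_mem_budgetSet [AddCommMonoid R] [Preorder R] [DecidableEq ι] (hb : 0 ≤ b)
    (hi : i ∈ A) : Pi.single i b ∈ budgetSet A b := by
  refine ⟨fun j => (Pi.single_nonneg.2 hb : (0 : ι → R) ≤ Pi.single i b) j, fun j hj => ?_, ?_⟩
  · exact Pi.single_eq_of_ne (ne_of_mem_of_not_mem hi hj).symm _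
  · rw [sum_pi_single' i b univ, if_pos (mem_univ i)]

variable [Semiring R] [LinearOrder R] [IsStrictOrderedRing R]

theorem isGreatest_dotProduct_image_budgetSet (hb : 0 ≤ b) (hi : i ∈ A) (hai : 0 ≤ a i)
    (hmax : ∀ j ∈ A, a j ≤ a i) :
    IsGreatest ((a ⬝ᵥ ·) '' budgetSet A b) (a i * b) := by
  classical
  refine ⟨⟨Pi.single i b, single_mem_budgetSet hb hi, dotProduct_single a b i⟩, ?_⟩
  rintro _ ⟨t, ht, rfl⟩
  calc
    a ⬝ᵥ t ≤ a i * ∑ j, t j :=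
      dotProduct_le_mul_sum ht.1 fun j hj => hmax j (mem_of_mem_budgetSet_of_ne_zero ht hj)
    _ ≤ a i * b := mul_le_mul_of_nonneg_left ht.2.2 hai

theorem isMaxOn_dotProduct_budgetSet_iff_eq (hb : 0 ≤ b) (hi : i ∈ A) (hai : 0 ≤ a i)
    (hmax : ∀ j ∈ A, a j ≤ a i) (ht : t ∈ budgetSet A b) :
    IsMaxOn (a ⬝ᵥ ·) (budgetSet A b) t ↔ a ⬝ᵥ t = a i * b := by
  obtain ⟨⟨x, hx, hxval⟩, hupper⟩ := isGreatest_dotProduct_image_budgetSet hb hi hai hmax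
  constructor
  · exact fun h => (hupper ⟨t, ht, rfl⟩).antisymm (hxval.symm.trans_le (h hx))
  · exact fun h y hy => (hupper ⟨y, hy, rfl⟩).trans_eq h.symm

theorem isMaxOn_dotProduct_budgetSet_iff (hb : 0 ≤ b) (ha : ∀ i ∈ A, 0 < a i)
    (ht : t ∈ budgetSet A b) :
    IsMaxOn (a ⬝ᵥ ·) (budgetSet A b) t ↔
      (A.Nonempty → ∑ i, t i = b ∧ ∀ i ∈ A, t i ≠ 0 → ∀ j ∈ A, a j ≤ a i) := by
  rcases A.eq_empty_or_nonempty with rfl | hA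
  · have eq_zero {y : ι → R} (hy : y ∈ budgetSet ∅ b) : y = 0 := funext fun i => hy.2.1 i id
    refine iff_of_true (fun y hy => ?_) fun h => absurd h Set.not_nonempty_empty
    rw [eq_zero hy, eq_zero ht]
    exact le_refl _
  · obtain ⟨i₀, hi₀, hmax⟩ := Set.exists_max_image A a A.toFinite hA
    have mem_of_ne_zero {i : ι} (hti : t i ≠ 0) : i ∈ A := mem_of_mem_budgetSet_of_ne_zero ht hti
    rw [isMaxOn_dotProduct_budgetSet_iff_eq hb hi₀ (ha i₀ hi₀).le hmax ht,
      dotProduct_eq_mul_iff_of_sum_le ht.1 ht.2.2 (fun i hti => hmax i (mem_of_ne_zero hti))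
        (ha i₀ hi₀), imp_iff_right hA]
    refine and_congr_right fun _ => ⟨fun h i _ hti j hj => ?_, fun h i hti => ?_⟩
    · exact (h i hti).symm ▸ hmax j hj
    · exact (hmax i (mem_of_ne_zero hti)).antisymm (h i (mem_of_ne_zero hti) hti i₀ hi₀)

end BudgetSet

namespace NCGame

variable {g : NCGame V} {c s : V → V → ℝ} {u v : V} {t : V → ℝ}

/-- The strategies of player `v`, so that the valid states form the product of these sets. -/
def strategySet (g : NCGame V) (v : V) : Set (V → ℝ) :=
  budgetSet {u | g.Adj v u} (g.B v)

theorem validState_iff_mem_pi : validState g s ↔ s ∈ Set.univ.pi g.strategySet :=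
  ⟨fun h v _ => ⟨h.1 v, h.2.1 v, h.2.2 v⟩,
    fun h => ⟨fun v => (h v trivial).1, fun v => (h v trivial).2.1, fun v => (h v trivial).2.2⟩⟩

theorem validState_update_iff (hs : validState g s) :
    validState g (Function.update s v t) ↔ t ∈ g.strategySet v := by
  rw [validState_iff_mem_pi] at hs ⊢
  rw [Set.update_mem_pi_iff_of_mem hs, imp_iff_right (Set.mem_univ v)]

/-- The reward of every edge `(u, v)` is `c u v` times the total effort on it. -/
def HasLinearSumRewards (g : NCGame V) (c : V → V → ℝ) : Prop :=
  ∀ u v, g.Adj u v → ∀ x y, g.f u v x y = c u v * (x + y)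

namespace HasLinearSumRewards

theorem weight_comm (hf : g.HasLinearSumRewards c) (huv : g.Adj u v) : c u v = c v u := by
  simpa only [hf u v huv, hf v u (g.adj_symm u v huv), add_zero, mul_one] using g.f_comm u v 1 0

theorem util_eq (hf : g.HasLinearSumRewards c) (hs : validState g s) (v : V) :
    util g s v = c v ⬝ᵥ s v + ∑ u, c v u * s u v := by
  rw [util, dotProduct, ← sum_add_distrib]
  refine sum_congr rfl fun u _ => ?_
  split_ifs with huv
  · rw [hf v u huv, mul_add]
  · rw [hs.2.1 v u huv, hs.2.1 u v (mt (g.adj_symm u v) huv), mul_zero, add_zero]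

theorem util_update_le_iff (hf : g.HasLinearSumRewards c) (hs : validState g s)
    (ht : t ∈ g.strategySet v) :
    util g (Function.update s v t) v ≤ util g s v ↔ c v ⬝ᵥ t ≤ c v ⬝ᵥ s v := by
  have hincoming (u : V) : Function.update s v t u v = s u v := by
    rcases eq_or_ne u v with rfl | huv
    · rw [Function.update_self, ht.2.1 u (g.adj_irrefl u), hs.2.1 u u (g.adj_irrefl u)]
    · rw [Function.update_of_ne huv]
  rw [hf.util_eq ((validState_update_iff hs).2 ht), hf.util_eq hs, Function.update_self]
  simp only [hincoming, add_le_add_iff_right]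

theorem welfare_eq (hf : g.HasLinearSumRewards c) (hs : validState g s) :
    welfare g s = 2 * ∑ v, c v ⬝ᵥ s v := by
  have hincoming : ∑ v, ∑ u, c v u * s u v = ∑ v, c v ⬝ᵥ s v := by
    rw [sum_comm]
    refine sum_congr rfl fun u _ => sum_congr rfl fun v _ => ?_
    by_cases huv : g.Adj u v
    · rw [hf.weight_comm huv]
    · rw [hs.2.1 u v huv, mul_zero, mul_zero]
  calc
    welfare g s = ∑ v, (c v ⬝ᵥ s v + ∑ u, c v u * s u v) :=
      sum_congr rfl fun v _ => hf.util_eq hs v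
    _ = 2 * ∑ v, c v ⬝ᵥ s v := by rw [sum_add_distrib, hincoming, two_mul]

theorem isNashEq_iff_forall_isMaxOn (hf : g.HasLinearSumRewards c) (hs : validState g s) :
    IsNashEq g s ↔ ∀ v, IsMaxOn (c v ⬝ᵥ ·) (g.strategySet v) (s v) := by
  rw [IsNashEq, and_iff_right hs]
  refine forall_congr' fun v => forall_congr' fun t => ?_
  rw [validState_update_iff hs]
  exact imp_congr_right fun ht => hf.util_update_le_iff hs ht

theorem isMaxOn_welfare_iff_forall_isMaxOn (hf : g.HasLinearSumRewards c) (hs : validState g s) :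
    IsMaxOn (welfare g) {s' | validState g s'} s ↔
      ∀ v, IsMaxOn (c v ⬝ᵥ ·) (g.strategySet v) (s v) := by
  rw [← isMaxOn_sum_pi_iff (F := fun v => (c v ⬝ᵥ ·)) (validState_iff_mem_pi.1 hs)]
  simp only [isMaxOn_iff, Set.mem_ofPred_eq, ← validState_iff_mem_pi]
  refine forall₂_congr fun s' hs' => ?_
  rw [hf.welfare_eq hs', hf.welfare_eq hs, mul_le_mul_iff_right₀ two_pos]

theorem isNashEq_iff_isMaxOn_welfare (hf : g.HasLinearSumRewards c) (hs : validState g s) :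
    IsNashEq g s ↔ IsMaxOn (welfare g) {s' | validState g s'} s :=
  (hf.isNashEq_iff_forall_isMaxOn hs).trans (hf.isMaxOn_welfare_iff_forall_isMaxOn hs).symm

end HasLinearSumRewards

end NCGame

/-- for reward functions `f_e(x,y) = c_e·(x+y)` with `c_e > 0`,
Nash equilibria are exactly the social optima (equivalently, the states where
every player with an incident edge spends its whole budget on incident edges of
maximal `c_e`); hence every pairwise equilibrium is a social optimum and the
price of anarchy for pairwise equilibria is 1. -/
theorem linear_sum_rewards_nash_iff_optimal (g : NCGame V)
    (c : V → V → ℝ) (hc : ∀ u v, g.Adj u v → 0 < c u v)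
    (hf : ∀ u v, g.Adj u v → ∀ x y, g.f u v x y = c u v * (x + y)) :
    (∀ s, validState g s →
      (IsNashEq g s ↔ ∀ s', validState g s' → welfare g s' ≤ welfare g s)) ∧
    (∀ s, validState g s →
      (IsNashEq g s ↔ ∀ v, (∃ u, g.Adj v u) →
        (∑ u, s v u) = g.B v ∧
        ∀ u, g.Adj v u → s v u ≠ 0 → ∀ u', g.Adj v u' → c v u' ≤ c v u)) ∧
    (∀ s, IsPairwiseEq g s → ∀ s', validState g s' → welfare g s' ≤ welfare g s) := by
  have hlin : g.HasLinearSumRewards c := hf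
  refine ⟨fun s hs => hlin.isNashEq_iff_isMaxOn_welfare hs, fun s hs => ?_,
    fun s hpair => (hlin.isNashEq_iff_isMaxOn_welfare hpair.1.1).1 hpair.1⟩
  rw [hlin.isNashEq_iff_forall_isMaxOn hs]
  exact forall_congr' fun v => isMaxOn_dotProduct_budgetSet_iff (g.B_nonneg v) (hc v)
    (NCGame.validState_iff_mem_pi.1 hs v trivial)
end

section
/- Consider a network contribution game in which every reward function f_e belongs to class C and is continuous. Then there exists a social optimum that is tight. Moreover, if every reward function belongs to class C' (strictly coordinate-convex), then every social optimum is tight. -/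
open Finset

variable {V : Type} [Fintype V] [DecidableEq V]

/-!
Fix the strategies of all players but `v`. Every edge reward is counted once for each endpoint, so
the welfare is twice the utility of `v` plus a constant, hence a convex function of the strategy of
`v`. The strategies of `v` form the convex hull of the pure ones, where `v` spends nothing or her
whole budget on a single edge. By the maximum principle for convex functions, players can therefore
be moved one at a time to pure strategies without losing welfare, and the best of the finitely many
pure states is optimal. If the rewards are strictly convex, then in an optimum every player sits at
an extreme point of her strategy set, and all extreme points are pure.
-/

section SeparableSum

variable {𝕜 β ι : Type*} {E : ι → Type*} [Semiring 𝕜] [PartialOrder 𝕜] [AddCommMonoid β]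
  [PartialOrder β] [Module 𝕜 β] [∀ i, AddCommMonoid (E i)] [∀ i, Module 𝕜 (E i)]

theorem convexOn_sum_apply [IsOrderedAddMonoid β] {N : Finset ι} {K : Set (∀ i, E i)}
    {D : ∀ i, Set (E i)} {h : ∀ i, E i → β} (hK : Convex 𝕜 K) (hKD : K ⊆ (N : Set ι).pi D)
    (hh : ∀ i ∈ N, ConvexOn 𝕜 (D i) (h i)) : ConvexOn 𝕜 K (fun x ↦ ∑ i ∈ N, h i (x i)) := by
  refine ⟨hK, fun x hx y hy a b ha hb hab ↦ ?_⟩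
  simp only [Finset.smul_sum, ← Finset.sum_add_distrib]
  exact Finset.sum_le_sum fun i hi ↦ (hh i hi).2 (hKD hx i hi) (hKD hy i hi) ha hb hab

theorem strictConvexOn_sum_apply [IsOrderedCancelAddMonoid β] {N : Finset ι} {K : Set (∀ i, E i)}
    {D : ∀ i, Set (E i)} {h : ∀ i, E i → β} (hK : Convex 𝕜 K) (hKD : K ⊆ (N : Set ι).pi D)
    (hinj : Set.InjOn N.restrict K) (hh : ∀ i ∈ N, StrictConvexOn 𝕜 (D i) (h i)) :
    StrictConvexOn 𝕜 K (fun x ↦ ∑ i ∈ N, h i (x i)) := by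
  refine ⟨hK, fun x hx y hy hxy a b ha hb hab ↦ ?_⟩
  obtain ⟨⟨i, hi⟩, hxyi⟩ : ∃ i : N, x i ≠ y i := Function.ne_iff.1 (hinj.ne hx hy hxy)
  simp only [Finset.smul_sum, ← Finset.sum_add_distrib]
  exact Finset.sum_lt_sum
    (fun j hj ↦ (hh j hj).convexOn.2 (hKD hx j hj) (hKD hy j hj) ha.le hb.le hab)
    ⟨i, hi, (hh i hi).2 (hKD hx i hi) (hKD hy i hi) hxyi ha hb hab⟩

end SeparableSum

section SeparateConvexity

variable {𝕜 β ι : Type*} {E : ι → Type*} [Field 𝕜] [LinearOrder 𝕜] [IsStrictOrderedRing 𝕜]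
  [AddCommGroup β] [LinearOrder β] [IsOrderedAddMonoid β] [Module 𝕜 β] [IsStrictOrderedModule 𝕜 β]
  [∀ i, AddCommGroup (E i)] [∀ i, Module 𝕜 (E i)]

theorem mem_extremePoints_of_isMaxOn_of_strictConvexOn {F : Type*} [AddCommGroup F] [Module 𝕜 F]
    {K : Set F} {φ : F → β} {x : F} (hφ : StrictConvexOn 𝕜 K φ) (hx : x ∈ K)
    (hmax : IsMaxOn φ K x) : x ∈ K.extremePoints 𝕜 := by
  refine mem_extremePoints_iff_left.2 ⟨hx, fun y hy z hz hxyz ↦ ?_⟩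
  rcases eq_or_ne y z with rfl | hyz
  · rw [openSegment_same] at hxyz
    exact hxyz.symm
  · have hlt : φ x < max (φ y) (φ z) := hφ.lt_on_openSegment hy hz hyz hxyz
    exact absurd hlt (max_le (hmax hy) (hmax hz)).not_gt

variable [DecidableEq ι] {S : ∀ i, Set (E i)} {φ : (∀ i, E i) → β}

theorem exists_mem_pi_finset_ge_of_convexOn_update
    (hφ : ∀ x ∈ Set.univ.pi fun i ↦ convexHull 𝕜 (S i), ∀ i,
      ConvexOn 𝕜 (convexHull 𝕜 (S i)) fun t ↦ φ (Function.update x i t))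
    {x : ∀ i, E i} (hx : x ∈ Set.univ.pi fun i ↦ convexHull 𝕜 (S i)) (I : Finset ι) :
    ∃ y ∈ Set.univ.pi fun i ↦ convexHull 𝕜 (S i), y ∈ (I : Set ι).pi S ∧ φ x ≤ φ y := by
  induction I using Finset.induction_on with
  | empty => exact ⟨x, hx, by simp, le_rfl⟩
  | insert i I hi ih =>
    obtain ⟨y, hy, hyI, hxy⟩ := ih
    obtain ⟨t, ht, hyt⟩ : ∃ t ∈ S i, φ (Function.update y i (y i)) ≤ φ (Function.update y i t) :=
      (hφ y hy i).exists_ge_of_mem_convexHull (subset_convexHull 𝕜 _) (hy i trivial)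
    rw [Function.update_eq_self] at hyt
    refine ⟨Function.update y i t, ?_, ?_, hxy.trans hyt⟩
    · exact (Set.update_mem_pi_iff_of_mem hy).2 fun _ ↦ subset_convexHull 𝕜 _ ht
    · rw [Finset.coe_insert, Set.insert_pi]
      refine ⟨by simpa using ht, fun j hj ↦ ?_⟩
      rw [Function.update_of_ne (ne_of_mem_of_not_mem hj hi)]
      exact hyI j hj

theorem exists_isMaxOn_pi_convexHull_of_convexOn_update [Finite ι]
    (hφ : ∀ x ∈ Set.univ.pi fun i ↦ convexHull 𝕜 (S i), ∀ i,
      ConvexOn 𝕜 (convexHull 𝕜 (S i)) fun t ↦ φ (Function.update x i t))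
    (hfin : ∀ i, (S i).Finite) (hne : ∀ i, (S i).Nonempty) :
    ∃ y ∈ Set.univ.pi S, IsMaxOn φ (Set.univ.pi fun i ↦ convexHull 𝕜 (S i)) y := by
  cases nonempty_fintype ι
  obtain ⟨y, hy, hmax⟩ :=
    Set.exists_max_image _ φ (Set.Finite.pi hfin) (Set.univ_pi_nonempty_iff.2 hne)
  refine ⟨y, hy, fun x hx ↦ ?_⟩
  obtain ⟨z, -, hz, hxz⟩ := exists_mem_pi_finset_ge_of_convexOn_update hφ hx Finset.univ
  rw [Finset.coe_univ] at hz
  exact hxz.trans (hmax z hz)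

theorem mem_extremePoints_of_isMaxOn_pi_of_strictConvexOn_update {K : ∀ i, Set (E i)}
    {x : ∀ i, E i} {i : ι} (hφ : StrictConvexOn 𝕜 (K i) fun t ↦ φ (Function.update x i t))
    (hx : x ∈ Set.univ.pi K) (hmax : IsMaxOn φ (Set.univ.pi K) x) :
    x i ∈ (K i).extremePoints 𝕜 := by
  refine mem_extremePoints_of_isMaxOn_of_strictConvexOn hφ (hx i trivial) fun t ht ↦ ?_
  change φ (Function.update x i t) ≤ φ (Function.update x i (x i))
  rw [Function.update_eq_self]
  exact hmax ((Set.update_mem_pi_iff_of_mem hx).2 fun _ ↦ ht)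

end SeparateConvexity

section BudgetSimplex

variable {𝕜 ι : Type*} [Field 𝕜] {N : Finset ι} {B : 𝕜}

/-- The ways of distributing at most the budget `B` over the coordinates in `N`, as vectors
vanishing off `N`. -/
def budgetSimplex [LinearOrder 𝕜] (N : Finset ι) (B : 𝕜) : Set (ι → 𝕜) :=
  {t | (∀ i, 0 ≤ t i) ∧ (∀ i ∉ N, t i = 0) ∧ ∑ i ∈ N, t i ≤ B}

/-- The vertices of `budgetSimplex N B`: nothing is spent, or the whole budget goes to a single
coordinate. -/
def budgetVertices [DecidableEq ι] (N : Finset ι) (B : 𝕜) : Set (ι → 𝕜) :=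
  insert 0 ((fun i ↦ Pi.single i B) '' (N : Set ι))

section Vertices

variable [DecidableEq ι]

theorem budgetVertices_finite : (budgetVertices N B).Finite :=
  (N.finite_toSet.image _).insert 0

theorem budgetVertices_nonempty : (budgetVertices N B).Nonempty :=
  Set.insert_nonempty _ _

theorem apply_eq_zero_or_eq_of_mem_budgetVertices {t : ι → 𝕜} (ht : t ∈ budgetVertices N B)
    (i : ι) : t i = 0 ∨ t i = B := by
  obtain rfl | ⟨j, -, rfl⟩ := ht
  · exact Or.inl rfl
  · rcases eq_or_ne i j with rfl | hij
    · simp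
    · simp [hij]

end Vertices

variable [LinearOrder 𝕜]

theorem injOn_restrict_budgetSimplex : Set.InjOn N.restrict (budgetSimplex N B) := by
  intro x hx y hy hxy
  ext i
  by_cases hi : i ∈ N
  · exact congrFun hxy ⟨i, hi⟩
  · rw [hx.2.1 i hi, hy.2.1 i hi]

theorem budgetVertices_subset_budgetSimplex [DecidableEq ι] (hB : 0 ≤ B) :
    budgetVertices N B ⊆ budgetSimplex N B := by
  rintro _ (rfl | ⟨i, hi, rfl⟩)
  · exact ⟨fun _ ↦ le_rfl, fun _ _ ↦ rfl, by simpa using hB⟩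
  · refine ⟨Pi.single_nonneg.2 hB, fun j hj ↦ ?_, ?_⟩
    · simp [(ne_of_mem_of_not_mem hi hj).symm]
    · simp [Finset.sum_pi_single', Finset.mem_coe.1 hi]

variable [IsStrictOrderedRing 𝕜]

theorem convex_budgetSimplex : Convex 𝕜 (budgetSimplex N B) := by
  rintro x ⟨hx_nonneg, hx_supp, hx_sum⟩ y ⟨hy_nonneg, hy_supp, hy_sum⟩ a b ha hb hab
  refine ⟨fun i ↦ ?_, fun i hi ↦ ?_, ?_⟩
  · exact add_nonneg (mul_nonneg ha (hx_nonneg i)) (mul_nonneg hb (hy_nonneg i))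
  · simp [hx_supp i hi, hy_supp i hi]
  · calc ∑ i ∈ N, (a • x + b • y) i = a • ∑ i ∈ N, x i + b • ∑ i ∈ N, y i := by
          simp [Finset.sum_add_distrib, Finset.mul_sum]
      _ ≤ B := convex_Iic B hx_sum hy_sum ha hb hab

theorem sum_smul_mem_of_convex_of_zero_mem {F : Type*} [AddCommGroup F] [Module 𝕜 F] {K : Set F}
    (hK : Convex 𝕜 K) (hzero : 0 ∈ K) {w : ι → 𝕜} {z : ι → F}
    (hw : ∀ i ∈ N, 0 ≤ w i) (hsum : ∑ i ∈ N, w i ≤ 1) (hz : ∀ i ∈ N, z i ∈ K) :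
    ∑ i ∈ N, w i • z i ∈ K := by
  have hmem := hK.sum_mem (t := N.insertNone)
    (w := fun o ↦ o.elim (1 - ∑ i ∈ N, w i) w) (z := fun o ↦ o.elim 0 z)
    (Finset.forall_mem_insertNone.2 ⟨sub_nonneg.2 hsum, hw⟩) (by simp)
    (Finset.forall_mem_insertNone.2 ⟨hzero, hz⟩)
  simpa using hmem

variable [DecidableEq ι]

theorem budgetSimplex_subset_convexHull (hB : 0 ≤ B) :
    budgetSimplex N B ⊆ convexHull 𝕜 (budgetVertices N B) := by
  rintro t ⟨ht_nonneg, ht_supp, ht_sum⟩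
  have hcancel (i : ι) (hi : i ∈ N) : t i / B * B = t i := by
    refine div_mul_cancel_of_imp fun hB_zero ↦ le_antisymm ?_ (ht_nonneg i)
    exact (Finset.single_le_sum (fun j _ ↦ ht_nonneg j) hi).trans (ht_sum.trans_eq hB_zero)
  have ht_eq : t = ∑ i ∈ N, (t i / B) • Pi.single i B := by
    ext j
    by_cases hj : j ∈ N
    · simp [Finset.sum_apply, Pi.single_apply, hj, hcancel]
    · simp [Finset.sum_apply, Pi.single_apply, hj, ht_supp]
  rw [ht_eq]
  refine sum_smul_mem_of_convex_of_zero_mem (convex_convexHull 𝕜 _)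
    (subset_convexHull 𝕜 _ (Set.mem_insert _ _)) (fun i _ ↦ div_nonneg (ht_nonneg i) hB) ?_
    fun i hi ↦ subset_convexHull 𝕜 _ (Set.mem_insert_of_mem _ ⟨i, hi, rfl⟩)
  rw [← Finset.sum_div]
  exact div_le_one_of_le₀ ht_sum hB

theorem convexHull_budgetVertices (hB : 0 ≤ B) :
    convexHull 𝕜 (budgetVertices N B) = budgetSimplex N B :=
  (convexHull_min (budgetVertices_subset_budgetSimplex hB) convex_budgetSimplex).antisymm
    (budgetSimplex_subset_convexHull hB)

end BudgetSimplex

theorem sum_sum_eq_two_nsmul_sum_add_of_symm {ι M : Type*} [Fintype ι] [DecidableEq ι]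
    [AddCommMonoid M] {m : ι → ι → M} (hm : ∀ a b, m a b = m b a) {v : ι} (hv : m v v = 0) :
    ∑ a, ∑ b, m a b = 2 • ∑ b, m v b + ∑ a ∈ univ.erase v, ∑ b ∈ univ.erase v, m a b := by
  have hcolumn : ∑ a ∈ univ.erase v, m a v = ∑ b, m v b := by
    simp only [hm _ v]
    exact Finset.sum_erase _ hv
  calc ∑ a, ∑ b, m a b
      = ∑ b, m v b + ∑ a ∈ univ.erase v, ∑ b, m a b :=
        (Finset.add_sum_erase _ _ (mem_univ v)).symm
    _ = ∑ b, m v b + ∑ a ∈ univ.erase v, (m a v + ∑ b ∈ univ.erase v, m a b) := by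
        simp only [Finset.add_sum_erase _ _ (mem_univ v)]
    _ = 2 • ∑ b, m v b + ∑ a ∈ univ.erase v, ∑ b ∈ univ.erase v, m a b := by
        rw [Finset.sum_add_distrib, hcolumn, two_nsmul, add_assoc]

namespace NCGame

variable (g : NCGame V)

open Classical in
/-- The neighbors of a player, as a finset that efforts can be summed over; adjacency is decided
classically. -/
noncomputable def neighbors (v : V) : Finset V := {u | g.Adj v u}

/-- The strategies of a player, as effort vectors indexed by all players and supported on her
neighbors. -/
noncomputable def strategies (v : V) : Set (V → ℝ) := budgetSimplex (g.neighbors v) (g.B v)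

/-- The strategies of a player who spends nothing, or her whole budget on a single edge;
all entries of such a strategy are tight. -/
noncomputable def pureStrategies (v : V) : Set (V → ℝ) :=
  budgetVertices (g.neighbors v) (g.B v)

open Classical in
/-- The reward which each endpoint of the edge `(a, b)` receives in the state `s`, extended by
`0` to non-adjacent pairs so that it can be summed over all pairs. -/
noncomputable def edgeReward (s : V → V → ℝ) (a b : V) : ℝ :=
  if g.Adj a b then g.f a b (s a b) (s b a) else 0

theorem mem_neighbors {v u : V} : u ∈ g.neighbors v ↔ g.Adj v u := by
  simp [neighbors]

theorem convexHull_pureStrategies (v : V) : convexHull ℝ (g.pureStrategies v) = g.strategies v :=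
  convexHull_budgetVertices (g.B_nonneg v)

theorem validState_iff_mem_pi_strategies {s : V → V → ℝ} :
    validState g s ↔ s ∈ Set.univ.pi g.strategies := by
  have hsum (hsupp : ∀ v u, ¬ g.Adj v u → s v u = 0) (v : V) :
      ∑ u ∈ g.neighbors v, s v u = ∑ u, s v u :=
    Finset.sum_subset (subset_univ _) fun u _ hu ↦ hsupp v u (mt g.mem_neighbors.2 hu)
  constructor
  · rintro ⟨hnonneg, hsupp, hbudget⟩ v -
    exact ⟨hnonneg v, fun u hu ↦ hsupp v u (mt g.mem_neighbors.2 hu),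
      (hsum hsupp v).trans_le (hbudget v)⟩
  · intro hs
    have hsupp (v u : V) (hvu : ¬ g.Adj v u) : s v u = 0 :=
      (hs v trivial).2.1 u (mt g.mem_neighbors.1 hvu)
    exact ⟨fun v ↦ (hs v trivial).1, hsupp,
      fun v ↦ (hsum hsupp v).symm.trans_le (hs v trivial).2.2⟩

theorem tightState_of_mem_pureStrategies {s : V → V → ℝ}
    (hs : s ∈ Set.univ.pi g.pureStrategies) : tightState g s :=
  fun u v _ ↦ apply_eq_zero_or_eq_of_mem_budgetVertices (hs u trivial) v

theorem edgeReward_comm (s : V → V → ℝ) (a b : V) : g.edgeReward s a b = g.edgeReward s b a := by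
  classical
  have hadj : g.Adj a b ↔ g.Adj b a := ⟨g.adj_symm a b, g.adj_symm b a⟩
  simp only [edgeReward, g.f_comm a b, g.f_symm b a (s a b)]
  exact if_congr hadj rfl rfl

theorem edgeReward_self (s : V → V → ℝ) (v : V) : g.edgeReward s v v = 0 :=
  if_neg (g.adj_irrefl v)

theorem welfare_eq_two_mul_util_add (s : V → V → ℝ) (v : V) :
    welfare g s =
      2 * util g s v + ∑ a ∈ univ.erase v, ∑ b ∈ univ.erase v, g.edgeReward s a b := by
  rw [two_mul, ← two_nsmul]
  exact sum_sum_eq_two_nsmul_sum_add_of_symm (g.edgeReward_comm s) (g.edgeReward_self s v)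

theorem util_update_self (s : V → V → ℝ) (v : V) (t : V → ℝ) :
    util g (Function.update s v t) v = ∑ u ∈ g.neighbors v, g.f v u (t u) (s u v) := by
  rw [util, neighbors, Finset.sum_filter]
  refine Finset.sum_congr rfl fun u _ ↦ ?_
  split_ifs with hvu
  · have huv : u ≠ v := by
      rintro rfl
      exact g.adj_irrefl u hvu
    rw [Function.update_self, Function.update_of_ne huv]
  · rfl

theorem welfare_update (s : V → V → ℝ) (v : V) (t : V → ℝ) :
    welfare g (Function.update s v t) = 2 * ∑ u ∈ g.neighbors v, g.f v u (t u) (s u v) +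
      ∑ a ∈ univ.erase v, ∑ b ∈ univ.erase v, g.edgeReward s a b := by
  rw [welfare_eq_two_mul_util_add g _ v, util_update_self]
  congr 1
  refine Finset.sum_congr rfl fun a ha ↦ Finset.sum_congr rfl fun b hb ↦ ?_
  simp only [edgeReward, Function.update_of_ne (Finset.ne_of_mem_erase ha),
    Function.update_of_ne (Finset.ne_of_mem_erase hb)]

theorem strategies_subset_pi_Ici (v : V) :
    g.strategies v ⊆ (g.neighbors v : Set V).pi fun _ ↦ Set.Ici 0 :=
  fun _ ht u _ ↦ ht.1 u

variable {g}

theorem convexOn_welfare_update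
    (hconv : ∀ u v, g.Adj u v → ∀ y, 0 ≤ y → ConvexOn ℝ (Set.Ici 0) fun x ↦ g.f u v x y)
    {s : V → V → ℝ} (hs : ∀ u v, 0 ≤ s u v) (v : V) :
    ConvexOn ℝ (g.strategies v) fun t ↦ welfare g (Function.update s v t) := by
  have hutil : ConvexOn ℝ (g.strategies v) fun t ↦
      ∑ u ∈ g.neighbors v, g.f v u (t u) (s u v) :=
    convexOn_sum_apply (h := fun u x ↦ g.f v u x (s u v)) convex_budgetSimplex
      (g.strategies_subset_pi_Ici v)
      fun u hu ↦ hconv v u (g.mem_neighbors.1 hu) (s u v) (hs u v)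
  simp only [welfare_update, two_mul]
  exact (hutil.add hutil).add_const _

theorem strictConvexOn_welfare_update
    (hconv : ∀ u v, g.Adj u v → ∀ y, 0 ≤ y → StrictConvexOn ℝ (Set.Ici 0) fun x ↦ g.f u v x y)
    {s : V → V → ℝ} (hs : ∀ u v, 0 ≤ s u v) (v : V) :
    StrictConvexOn ℝ (g.strategies v) fun t ↦ welfare g (Function.update s v t) := by
  have hutil : StrictConvexOn ℝ (g.strategies v) fun t ↦
      ∑ u ∈ g.neighbors v, g.f v u (t u) (s u v) :=
    strictConvexOn_sum_apply (h := fun u x ↦ g.f v u x (s u v)) convex_budgetSimplex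
      (g.strategies_subset_pi_Ici v) injOn_restrict_budgetSimplex
      fun u hu ↦ hconv v u (g.mem_neighbors.1 hu) (s u v) (hs u v)
  simp only [welfare_update, two_mul]
  exact (hutil.add hutil).add_const _

theorem exists_isMaxOn_welfare_mem_pureStrategies
    (hconv : ∀ u v, g.Adj u v → ∀ y, 0 ≤ y → ConvexOn ℝ (Set.Ici 0) fun x ↦ g.f u v x y) :
    ∃ s ∈ Set.univ.pi g.pureStrategies, IsMaxOn (welfare g) (Set.univ.pi g.strategies) s := by
  rw [← funext g.convexHull_pureStrategies]
  refine exists_isMaxOn_pi_convexHull_of_convexOn_update (fun s hs v ↦ ?_)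
    (fun _ ↦ budgetVertices_finite) fun _ ↦ budgetVertices_nonempty
  simp only [convexHull_pureStrategies] at hs ⊢
  exact convexOn_welfare_update hconv (g.validState_iff_mem_pi_strategies.2 hs).1 v

theorem mem_pureStrategies_of_isMaxOn_welfare
    (hconv : ∀ u v, g.Adj u v → ∀ y, 0 ≤ y → StrictConvexOn ℝ (Set.Ici 0) fun x ↦ g.f u v x y)
    {s : V → V → ℝ} (hs : s ∈ Set.univ.pi g.strategies)
    (hmax : IsMaxOn (welfare g) (Set.univ.pi g.strategies) s) :
    s ∈ Set.univ.pi g.pureStrategies := by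
  intro v _
  have hsection : StrictConvexOn ℝ (g.strategies v) fun t ↦ welfare g (Function.update s v t) :=
    strictConvexOn_welfare_update hconv (g.validState_iff_mem_pi_strategies.2 hs).1 v
  have hextreme : s v ∈ (g.strategies v).extremePoints ℝ :=
    mem_extremePoints_of_isMaxOn_pi_of_strictConvexOn_update hsection hs hmax
  rw [← convexHull_pureStrategies] at hextreme
  exact extremePoints_convexHull_subset hextreme

end NCGame

theorem exists_tight_optimum_general (g : NCGame V) :
    ((∀ u v, g.Adj u v → ∀ y, 0 ≤ y → ConvexOn ℝ (Set.Ici 0) (fun x => g.f u v x y)) →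
      ∃ s, validState g s ∧ (∀ s', validState g s' → welfare g s' ≤ welfare g s) ∧
        tightState g s) ∧
    ((∀ u v, g.Adj u v → ∀ y, 0 ≤ y →
        StrictConvexOn ℝ (Set.Ici 0) (fun x => g.f u v x y)) →
      ∀ s, validState g s → (∀ s', validState g s' → welfare g s' ≤ welfare g s) →
        tightState g s) := by
  simp only [g.validState_iff_mem_pi_strategies]
  constructor
  · intro hconv
    obtain ⟨s, hpure, hmax⟩ := NCGame.exists_isMaxOn_welfare_mem_pureStrategies hconv
    have hs : s ∈ Set.univ.pi g.strategies := fun v hv ↦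
      budgetVertices_subset_budgetSimplex (g.B_nonneg v) (hpure v hv)
    exact ⟨s, hs, isMaxOn_iff.1 hmax, g.tightState_of_mem_pureStrategies hpure⟩
  · intro hconv s hs hmax
    exact g.tightState_of_mem_pureStrategies
      (NCGame.mem_pureStrategies_of_isMaxOn_welfare hconv hs (isMaxOn_iff.2 hmax))

/-- with continuous class-`C` rewards there exists a tight social
optimum; with class-`C'` (strictly coordinate-convex) rewards every social
optimum is tight. -/
theorem exists_tight_optimum (g : NCGame V)
    (hC : ∀ u v, g.Adj u v → InClassC (g.f u v))
    (hcont : ∀ u v, g.Adj u v →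
      ContinuousOn (fun q : ℝ × ℝ => g.f u v q.1 q.2) (Set.Ici 0 ×ˢ Set.Ici 0)) :
    (∃ s, validState g s ∧ (∀ s', validState g s' → welfare g s' ≤ welfare g s) ∧
      tightState g s) ∧
    ((∀ u v, g.Adj u v → ∀ y, 0 ≤ y →
        StrictConvexOn ℝ (Set.Ici 0) (fun x => g.f u v x y)) →
      ∀ s, validState g s → (∀ s', validState g s' → welfare g s' ≤ welfare g s) →
        tightState g s) :=
  ⟨(exists_tight_optimum_general g).1 fun u v huv ↦ (hC u v huv).2.2.2,
    (exists_tight_optimum_general g).2⟩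
end

section
/- Consider a network contribution game in which every reward function f_e belongs to class C and additionally has nondecreasing differences, i.e. f_e(x',y') − f_e(x,y') ≥ f_e(x',y) − f_e(x,y) whenever x ≤ x' and y ≤ y'. Then for every pairwise equilibrium s there exists a pairwise equilibrium s' with the same social welfare, w(s') = w(s), that has no slack edges. -/
open Finset

variable {V : Type} [Fintype V] [DecidableEq V]

/-!
On a slack edge `(u, v)` player `u` splits its budget between the edge and the rest, so its strategy
is a convex combination of going all in on `v` and of withdrawing from `v` and rescaling the rest.
Utilities are convex in a player's own strategy and the equilibrium strategy is optimal, so moving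
all in costs nothing and the reward of the edge lies on its chord. If both endpoints go all in, one
of them must fail to gain; convexity and nondecreasing differences then force the reward of the edge
to be constant on all feasible efforts. Hence setting the efforts on all slack edges to zero changes
no utility, neither in the equilibrium nor after any deviation from it.
-/

section Convexity

theorem map_combo_eq_of_sum_le {𝕜 E β ι : Type*} [Semiring 𝕜] [PartialOrder 𝕜]
    [AddCommMonoid E] [SMul 𝕜 E] [AddCommMonoid β] [PartialOrder β] [IsOrderedCancelAddMonoid β]
    [Module 𝕜 β] [PosSMulMono 𝕜 β] {S : Set E} {I : Finset ι} {φ : ι → E → β}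
    (hφ : ∀ i ∈ I, ConvexOn 𝕜 S (φ i)) {x y : E} (hx : x ∈ S) (hy : y ∈ S) {a b : 𝕜}
    (ha : 0 ≤ a) (hb : 0 ≤ b) (hab : a + b = 1)
    (hxle : ∑ i ∈ I, φ i x ≤ ∑ i ∈ I, φ i (a • x + b • y))
    (hyle : ∑ i ∈ I, φ i y ≤ ∑ i ∈ I, φ i (a • x + b • y)) {i : ι} (hi : i ∈ I) :
    φ i (a • x + b • y) = a • φ i x + b • φ i y := by
  have jensen : ∀ i ∈ I, φ i (a • x + b • y) ≤ a • φ i x + b • φ i y :=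
    fun i hi => (hφ i hi).2 hx hy ha hb hab
  refine (sum_eq_sum_iff_of_le jensen).1 (le_antisymm (sum_le_sum jensen) ?_) i hi
  calc ∑ i ∈ I, (a • φ i x + b • φ i y)
      = a • ∑ i ∈ I, φ i x + b • ∑ i ∈ I, φ i y := by
        rw [sum_add_distrib, ← smul_sum, ← smul_sum]
    _ ≤ a • ∑ i ∈ I, φ i (a • x + b • y) + b • ∑ i ∈ I, φ i (a • x + b • y) := by gcongr
    _ = ∑ i ∈ I, φ i (a • x + b • y) := by rw [← add_smul, hab, one_smul]

theorem right_le_left_of_eq_chord {𝕜 : Type*} [Field 𝕜] [LinearOrder 𝕜] [IsStrictOrderedRing 𝕜]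
    {S : Set 𝕜} {φ : 𝕜 → 𝕜} (hφ : ConvexOn 𝕜 S φ) {a m x b : 𝕜} (hm : m ∈ S) (hb : b ∈ S)
    (ham : a < m) (hmx : m ≤ x) (hxb : x < b)
    (hchord : (b - a) * φ x = (b - x) * φ a + (x - a) * φ b) (hma : φ m ≤ φ a) :
    φ b ≤ φ a := by
  have hsecant : (b - m) * φ x ≤ (b - x) * φ m + (x - m) * φ b := by
    rcases hmx.eq_or_lt with rfl | hmx
    · simp
    · exact hφ.secant_mono_aux1 hm hb hmx hxb
  have hsecant' : (b - m) * φ x ≤ (b - x) * φ a + (x - m) * φ b :=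
    hsecant.trans (by gcongr)
  have hprod : ((b - x) * (m - a)) * φ b ≤ ((b - x) * (m - a)) * φ a := by
    have := mul_le_mul_of_nonneg_left hsecant' (show 0 ≤ b - a by linarith)
    linear_combination this + (m - b) * hchord
  exact le_of_mul_le_mul_left hprod (mul_pos (sub_pos.2 hxb) (sub_pos.2 ham))

end Convexity

section RewardFunctions

/-- Nondecreasing differences on the nonnegative quadrant: the gain from raising one argument grows
with the other argument. -/
def HasNondecreasingDifferences (f : ℝ → ℝ → ℝ) : Prop :=
  ∀ x x' y y', 0 ≤ x → x ≤ x' → 0 ≤ y → y ≤ y' → f x' y - f x y ≤ f x' y' - f x y'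

variable {f : ℝ → ℝ → ℝ} {a b p q x y : ℝ}

theorem InClassC.apply_le_apply (hf : InClassC f) (ha : 0 ≤ a) (hx : a ≤ x) (hb : 0 ≤ b)
    (hy : b ≤ y) : f a b ≤ f x y := by
  obtain ⟨-, hsymm, hmono, -⟩ := hf
  calc f a b ≤ f x b := hmono b hb ha (ha.trans hx) hx
    _ = f b x := hsymm x b
    _ ≤ f y x := hmono x (ha.trans hx) hb (hb.trans hy) hy
    _ = f x y := hsymm y x

theorem InClassC.apply_right_le_apply_zero (hf : InClassC f) (hp : 0 ≤ p) (hy : 0 ≤ y)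
    (hyq : y < q) (hsat : f p q ≤ f p y) : f p q ≤ f p 0 := by
  obtain ⟨-, hsymm, -, hconv⟩ := hf
  rw [hsymm p q, hsymm p y] at hsat
  rw [hsymm p q, hsymm p 0]
  exact hsat.trans <|
    (hconv p hp).le_left_of_right_le'' Set.self_mem_Ici (hy.trans hyq.le) hy hyq hsat

theorem InClassC.apply_le_apply_zero_zero_of_le_of_le (hf : InClassC f)
    (hdiff : HasNondecreasingDifferences f) (hpq : f p q ≤ f p 0) (ha : 0 ≤ a) (hap : a ≤ p)
    (haq : a ≤ q) (hb : 0 ≤ b) (hbq : b ≤ q) : f a b ≤ f 0 0 := by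
  have hq : 0 ≤ q := ha.trans haq
  have hconst : ∀ c, 0 ≤ c → c ≤ p → f c q ≤ f c 0 := fun c hc hcp => by
    linarith [hdiff c p 0 q hc hcp le_rfl hq]
  calc f a b ≤ f a q := hf.apply_le_apply ha le_rfl hb hbq
    _ ≤ f a 0 := hconst a ha hap
    _ ≤ f q 0 := hf.apply_le_apply ha haq le_rfl le_rfl
    _ = f 0 q := hf.2.1 q 0
    _ ≤ f 0 0 := hconst 0 le_rfl (ha.trans hap)

theorem InClassC.apply_le_apply_zero_zero_of_eq_chord (hf : InClassC f)
    (hdiff : HasNondecreasingDifferences f) (hx : 0 < x) (hxp : x < p) (hy : 0 < y) (hyq : y < q)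
    (hchord : p * f x y = (p - x) * f 0 y + x * f p y) (hsat : f p q ≤ f p y) :
    f p q ≤ f 0 0 := by
  have hp : 0 < p := hx.trans hxp
  have hpq : f p q ≤ f p 0 := hf.apply_right_le_apply_zero hp.le hy.le hyq hsat
  have hzero : ∀ c, 0 ≤ c → c ≤ x → c ≤ q → f c y ≤ f 0 0 := fun c hc hcx hcq =>
    hf.apply_le_apply_zero_zero_of_le_of_le hdiff hpq hc (hcx.trans hxp.le) hcq hy.le hyq.le
  have hm : 0 < min x q := lt_min hx (hy.trans hyq)
  have hmin : f (min x q) y ≤ f 0 y :=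
    (hzero _ hm.le (min_le_left x q) (min_le_right x q)).trans
      (hf.apply_le_apply le_rfl le_rfl le_rfl hy.le)
  calc f p q ≤ f p y := hsat
    _ ≤ f 0 y :=
      right_le_left_of_eq_chord (hf.2.2.2 y hy.le) hm.le hp.le hm (min_le_left x q) hxp
        (by simpa only [sub_zero] using hchord) hmin
    _ ≤ f 0 0 := hzero 0 le_rfl hx.le (hy.trans hyq).le

end RewardFunctions

section States

variable {g : NCGame V} {s : V → V → ℝ} {u v : V} {t : V → ℝ}

theorem NCGame.ne_of_adj (h : g.Adj u v) : u ≠ v := by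
  rintro rfl
  exact g.adj_irrefl _ h

/-- The strategies available to player `u`: nonnegative efforts on incident edges, within budget.
A state is valid iff the strategy of every player is feasible. -/
def IsFeasible (g : NCGame V) (u : V) (t : V → ℝ) : Prop :=
  (∀ w, 0 ≤ t w) ∧ (∀ w, ¬ g.Adj u w → t w = 0) ∧ ∑ w, t w ≤ g.B u

theorem validState.isFeasible (hs : validState g s) (u : V) : IsFeasible g u (s u) :=
  ⟨hs.1 u, hs.2.1 u, hs.2.2 u⟩

theorem validState_of_forall_isFeasible (hs : ∀ u, IsFeasible g u (s u)) : validState g s :=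
  ⟨fun u => (hs u).1, fun u => (hs u).2.1, fun u => (hs u).2.2⟩

theorem validState.update (hs : validState g s) (ht : IsFeasible g u t) :
    validState g (Function.update s u t) :=
  validState_of_forall_isFeasible <|
    (Function.forall_update_iff s fun w r => IsFeasible g w r).2 ⟨ht, fun w _ => hs.isFeasible w⟩

theorem validState.isFeasible_of_update (hs : validState g (Function.update s u t)) :
    IsFeasible g u t := by
  simpa only [Function.update_self] using hs.isFeasible u

theorem validState.mem_Icc (hs : validState g s) (u v : V) : s u v ∈ Set.Icc 0 (g.B u) :=
  ⟨hs.1 u v, (single_le_sum (fun w _ => hs.1 u w) (mem_univ v)).trans (hs.2.2 u)⟩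

open Classical in
/-- The reward of player `u` from the edge to `w` as a function of the whole strategy `t` of `u`,
the other players following `s`; zero if there is no such edge. -/
noncomputable def edgeReward (g : NCGame V) (s : V → V → ℝ) (u w : V) (t : V → ℝ) : ℝ :=
  if g.Adj u w then g.f u w (t w) (s w u) else 0

theorem util_eq_sum_edgeReward (g : NCGame V) (s : V → V → ℝ) (u : V) :
    util g s u = ∑ w, edgeReward g s u w (s u) :=
  rfl

theorem util_update_self (g : NCGame V) (s : V → V → ℝ) (u : V) (t : V → ℝ) :
    util g (Function.update s u t) u = ∑ w, edgeReward g s u w t := by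
  refine sum_congr rfl fun w _ => ?_
  by_cases h : g.Adj u w
  · simp [edgeReward, h, (g.ne_of_adj h).symm]
  · simp [edgeReward, h]

theorem util_update_of_adj (s : V → V → ℝ) (h : g.Adj u v) (t : V → ℝ) :
    util g (Function.update s v t) u =
      util g s u + (g.f u v (s u v) (t u) - g.f u v (s u v) (s v u)) := by
  have huv := g.ne_of_adj h
  rw [← sub_eq_iff_eq_add', util, util, ← sum_sub_distrib, sum_eq_single v]
  · simp [h, huv]
  · intro w _ hwv
    simp [huv, hwv]
  · simp

theorem convexOn_edgeReward (hC : ∀ w, g.Adj u w → InClassC (g.f u w)) (hs : validState g s)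
    (w : V) : ConvexOn ℝ (Set.Ici 0) (edgeReward g s u w) := by
  by_cases h : g.Adj u w
  · have hconv := ((hC w h).2.2.2 (s w u) (hs.1 w u)).comp_linearMap
      (LinearMap.proj w : (V → ℝ) →ₗ[ℝ] ℝ)
    have heq : edgeReward g s u w = fun t => g.f u w (t w) (s w u) := by
      funext t
      exact if_pos h
    rw [heq]
    exact hconv.subset (fun t (ht : 0 ≤ t) => ht w) (convex_Ici 0)
  · have heq : edgeReward g s u w = fun _ => 0 := by
      funext t
      exact if_neg h
    rw [heq]
    exact convexOn_const 0 (convex_Ici 0)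

end States

section Deviations

variable {g : NCGame V} {s : V → V → ℝ} {u v : V} {t : V → ℝ}

/-- The strategy of player `u` that puts its whole budget on the edge to `v`. -/
def allIn (g : NCGame V) (u v : V) : V → ℝ :=
  Pi.single v (g.B u)

/-- The strategy of player `u` that withdraws its effort from the edge to `v` and scales its other
efforts in `s`, whose sum is at most `g.B u - s u v`, by the factor that keeps them within budget.
For `s u v = g.B u` this is the zero strategy, by `x / 0 = 0`. -/
noncomputable def withdraw (g : NCGame V) (s : V → V → ℝ) (u v : V) : V → ℝ :=
  (g.B u / (g.B u - s u v)) • Function.update (s u) v 0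

theorem isFeasible_allIn (h : g.Adj u v) : IsFeasible g u (allIn g u v) := by
  have hnonneg : 0 ≤ allIn g u v := Pi.single_nonneg.2 (g.B_nonneg u)
  refine ⟨hnonneg, fun w hw => ?_, by simp [allIn]⟩
  have hwv : w ≠ v := by
    rintro rfl
    exact hw h
  exact Pi.single_eq_of_ne hwv _

theorem validState.isFeasible_withdraw (hs : validState g s) (hlt : s u v < g.B u) :
    IsFeasible g u (withdraw g s u v) := by
  have hpos : 0 < g.B u - s u v := sub_pos.2 hlt
  have hscale : 0 ≤ g.B u / (g.B u - s u v) := div_nonneg (g.B_nonneg u) hpos.le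
  refine ⟨fun w => mul_nonneg hscale ?_, fun w hw => mul_eq_zero_of_right _ ?_, ?_⟩
  · rcases eq_or_ne w v with rfl | hwv
    · simp
    · simpa [hwv] using hs.1 u w
  · rcases eq_or_ne w v with rfl | hwv
    · simp
    · simpa [hwv] using hs.2.1 u w hw
  · have hrest : ∑ w, Function.update (s u) v 0 w ≤ g.B u - s u v := by
      rw [sum_update_of_mem (mem_univ v), zero_add, ← erase_eq, sum_erase_eq_sub (mem_univ v)]
      exact sub_le_sub_right (hs.2.2 u) _
    calc ∑ w, withdraw g s u v w
        = g.B u / (g.B u - s u v) * ∑ w, Function.update (s u) v 0 w := by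
          simp only [withdraw, Pi.smul_apply, smul_eq_mul, mul_sum]
      _ ≤ g.B u / (g.B u - s u v) * (g.B u - s u v) := by gcongr
      _ = g.B u := div_mul_cancel₀ _ hpos.ne'

theorem combo_allIn_withdraw (hB : g.B u ≠ 0) (hne : s u v ≠ g.B u) :
    (s u v / g.B u) • allIn g u v + ((g.B u - s u v) / g.B u) • withdraw g s u v = s u := by
  have hsub : g.B u - s u v ≠ 0 := sub_ne_zero.2 hne.symm
  funext w
  rcases eq_or_ne w v with rfl | hwv
  · simp [allIn, withdraw, hB]
  · simp only [allIn, withdraw, Pi.add_apply, Pi.smul_apply, Pi.single_eq_of_ne hwv,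
      Function.update_of_ne hwv, smul_eq_mul]
    field_simp
    ring

theorem IsNashEq.sum_edgeReward_le (hs : IsNashEq g s) (ht : IsFeasible g u t) :
    ∑ w, edgeReward g s u w t ≤ ∑ w, edgeReward g s u w (s u) := by
  rw [← util_update_self, ← util_eq_sum_edgeReward]
  exact hs.2 u t (hs.1.update ht)

theorem IsNashEq.edgeReward_eq_combo (hs : IsNashEq g s)
    (hC : ∀ w, g.Adj u w → InClassC (g.f u w)) (huv : g.Adj u v) (hpos : 0 < s u v)
    (hlt : s u v < g.B u) (w : V) :
    edgeReward g s u w (s u) = s u v / g.B u * edgeReward g s u w (allIn g u v) +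
      (g.B u - s u v) / g.B u * edgeReward g s u w (withdraw g s u v) := by
  have hB : 0 < g.B u := hpos.trans hlt
  have hcombo := combo_allIn_withdraw hB.ne' hlt.ne
  have hA := isFeasible_allIn huv
  have hW := hs.1.isFeasible_withdraw hlt
  have := map_combo_eq_of_sum_le (fun w _ => convexOn_edgeReward hC hs.1 w) hA.1 hW.1
    (div_nonneg hpos.le hB.le) (div_nonneg (sub_nonneg.2 hlt.le) hB.le)
    (by rw [← add_div, add_sub_cancel, div_self hB.ne'])
    (by rw [hcombo]; exact hs.sum_edgeReward_le hA)
    (by rw [hcombo]; exact hs.sum_edgeReward_le hW) (mem_univ w)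
  rwa [hcombo] at this

theorem IsNashEq.reward_eq_chord (hs : IsNashEq g s) (hC : ∀ w, g.Adj u w → InClassC (g.f u w))
    (huv : g.Adj u v) (hpos : 0 < s u v) (hlt : s u v < g.B u) :
    g.B u * g.f u v (s u v) (s v u) =
      (g.B u - s u v) * g.f u v 0 (s v u) + s u v * g.f u v (g.B u) (s v u) := by
  have hB : g.B u ≠ 0 := (hpos.trans hlt).ne'
  have hcombo := hs.edgeReward_eq_combo hC huv hpos hlt v
  simp only [edgeReward, huv, if_true, allIn, withdraw, Pi.smul_apply, Pi.single_eq_same,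
    Function.update_self, smul_zero] at hcombo
  field_simp at hcombo
  linarith

theorem IsNashEq.util_update_allIn (hs : IsNashEq g s)
    (hC : ∀ w, g.Adj u w → InClassC (g.f u w)) (huv : g.Adj u v) (hpos : 0 < s u v)
    (hlt : s u v < g.B u) : util g (Function.update s u (allIn g u v)) u = util g s u := by
  have hB : 0 < g.B u := hpos.trans hlt
  rw [util_update_self, util_eq_sum_edgeReward]
  refine le_antisymm (hs.sum_edgeReward_le (isFeasible_allIn huv)) ?_
  have hcombo : ∑ w, edgeReward g s u w (s u) =
      s u v / g.B u * ∑ w, edgeReward g s u w (allIn g u v) +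
        (g.B u - s u v) / g.B u * ∑ w, edgeReward g s u w (withdraw g s u v) := by
    rw [mul_sum, mul_sum, ← sum_add_distrib]
    exact sum_congr rfl fun w _ => hs.edgeReward_eq_combo hC huv hpos hlt w
  have hwithdraw := mul_le_mul_of_nonneg_left
    (hs.sum_edgeReward_le (hs.1.isFeasible_withdraw hlt)) (sub_nonneg.2 hlt.le)
  refine le_of_mul_le_mul_left ?_ hpos
  field_simp at hcombo
  linarith

end Deviations

section FlatEdges

variable {g : NCGame V} {s s' : V → V → ℝ} {u v : V}

/-- An edge that is slack in `s`: both endpoints contribute a positive amount below their budget. -/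
def IsSlack (g : NCGame V) (s : V → V → ℝ) (u v : V) : Prop :=
  g.Adj u v ∧ 0 < s u v ∧ s u v < g.B u ∧ 0 < s v u ∧ s v u < g.B v

/-- The reward of the pair `(u, v)` does not depend on the efforts, as long as these are within
budget. -/
def IsFlat (g : NCGame V) (u v : V) : Prop :=
  ∀ x ∈ Set.Icc 0 (g.B u), ∀ y ∈ Set.Icc 0 (g.B v), g.f u v x y = g.f u v 0 0

theorem IsSlack.symm (h : IsSlack g s u v) : IsSlack g s v u :=
  ⟨g.adj_symm _ _ h.1, h.2.2.2.1, h.2.2.2.2, h.2.1, h.2.2.1⟩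

theorem IsFlat.symm (h : IsFlat g u v) : IsFlat g v u := fun x hx y hy => by
  rw [g.f_comm v u, g.f_symm u v, h y hy x hx, g.f_comm v u]

theorem InClassC.isFlat (hf : InClassC (g.f u v))
    (hle : g.f u v (g.B u) (g.B v) ≤ g.f u v 0 0) : IsFlat g u v := fun _ hx _ hy =>
  le_antisymm ((hf.apply_le_apply hx.1 hx.2 hy.1 hy.2).trans hle)
    (hf.apply_le_apply le_rfl hx.1 le_rfl hy.1)

theorem IsPairwiseEq.reward_saturated_of_isSlack (hs : IsPairwiseEq g s)
    (hC : ∀ u v, g.Adj u v → InClassC (g.f u v)) (h : IsSlack g s u v) :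
    g.f u v (g.B u) (g.B v) ≤ g.f u v (g.B u) (s v u) ∨
      g.f v u (g.B v) (g.B u) ≤ g.f v u (g.B v) (s u v) := by
  obtain ⟨huv, hu0, huB, hv0, hvB⟩ := h
  have hvu := g.adj_symm _ _ huv
  have hne := g.ne_of_adj huv
  have hutil_u : util g (Function.update (Function.update s u (allIn g u v)) v (allIn g v u)) u =
      util g s u + (g.f u v (g.B u) (g.B v) - g.f u v (g.B u) (s v u)) := by
    rw [util_update_of_adj _ huv, hs.1.util_update_allIn (hC u) huv hu0 huB]
    simp [allIn, hne.symm]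
  have hutil_v : util g (Function.update (Function.update s u (allIn g u v)) v (allIn g v u)) v =
      util g s v + (g.f v u (g.B v) (g.B u) - g.f v u (g.B v) (s u v)) := by
    rw [Function.update_comm hne, util_update_of_adj _ hvu,
      hs.1.util_update_allIn (hC v) hvu hv0 hvB]
    simp [allIn, hne]
  have hvalid := (hs.1.1.update (isFeasible_allIn huv)).update (isFeasible_allIn hvu)
  by_contra! hgain
  refine hs.2 u v _ _ hne hvalid ⟨?_, ?_⟩
  · rw [hutil_u]
    linarith [hgain.1]
  · rw [hutil_v]
    linarith [hgain.2]

theorem IsPairwiseEq.isFlat_of_isSlack (hs : IsPairwiseEq g s)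
    (hC : ∀ u v, g.Adj u v → InClassC (g.f u v))
    (hdiff : ∀ u v, g.Adj u v → HasNondecreasingDifferences (g.f u v)) (h : IsSlack g s u v) :
    IsFlat g u v := by
  have flat_of_saturated : ∀ {a b}, IsSlack g s a b →
      g.f a b (g.B a) (g.B b) ≤ g.f a b (g.B a) (s b a) → IsFlat g a b := by
    rintro a b ⟨hab, ha0, haB, hb0, hbB⟩ hsat
    exact (hC a b hab).isFlat <| (hC a b hab).apply_le_apply_zero_zero_of_eq_chord (hdiff a b hab)
      ha0 haB hb0 hbB (hs.1.reward_eq_chord (hC a) hab ha0 haB) hsat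
  rcases hs.reward_saturated_of_isSlack hC h with hsat | hsat
  · exact flat_of_saturated h hsat
  · exact (flat_of_saturated h.symm hsat).symm

/-- Two states that assign the same efforts except possibly on flat edges. -/
def EqOffFlat (g : NCGame V) (s s' : V → V → ℝ) : Prop :=
  ∀ u v, ¬ IsFlat g u v → s u v = s' u v

theorem EqOffFlat.update (h : EqOffFlat g s s') (u : V) (t : V → ℝ) :
    EqOffFlat g (Function.update s u t) (Function.update s' u t) := by
  intro a b hab
  rcases eq_or_ne a u with rfl | hau
  · simp
  · simpa [hau] using h a b hab

theorem EqOffFlat.util_eq (h : EqOffFlat g s s') (hs : validState g s) (hs' : validState g s')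
    (u : V) : util g s u = util g s' u := by
  refine sum_congr rfl fun w _ => ?_
  by_cases hflat : IsFlat g u w
  · rw [hflat _ (hs.mem_Icc u w) _ (hs.mem_Icc w u), hflat _ (hs'.mem_Icc u w) _ (hs'.mem_Icc w u)]
  · rw [h u w hflat, h w u fun hwu => hflat hwu.symm]

theorem EqOffFlat.welfare_eq (h : EqOffFlat g s s') (hs : validState g s)
    (hs' : validState g s') : welfare g s = welfare g s' :=
  sum_congr rfl fun u _ => h.util_eq hs hs' u

theorem IsNashEq.of_eqOffFlat (hs : IsNashEq g s) (h : EqOffFlat g s' s)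
    (hs' : validState g s') : IsNashEq g s' := by
  refine ⟨hs', fun v t ht => ?_⟩
  have ht' := hs.1.update ht.isFeasible_of_update
  rw [h.util_eq hs' hs.1, (h.update v t).util_eq ht ht']
  exact hs.2 v t ht'

theorem IsPairwiseEq.of_eqOffFlat (hs : IsPairwiseEq g s) (h : EqOffFlat g s' s)
    (hs' : validState g s') : IsPairwiseEq g s' := by
  refine ⟨hs.1.of_eqOffFlat h hs', fun u v tu tv huv ht => ?_⟩
  have htu : IsFeasible g u tu := by
    rw [Function.update_comm huv] at ht
    exact ht.isFeasible_of_update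
  have ht' := (hs.1.1.update htu).update ht.isFeasible_of_update
  have hdev := ((h.update u tu).update v tv).util_eq ht ht'
  rw [h.util_eq hs' hs.1.1, h.util_eq hs' hs.1.1, hdev, hdev]
  exact hs.2 u v tu tv huv ht'

open Classical in
/-- The state obtained from `s` by setting both efforts on every slack edge to zero. -/
noncomputable def dropSlack (g : NCGame V) (s : V → V → ℝ) : V → V → ℝ := fun u v =>
  if IsSlack g s u v then 0 else s u v

theorem dropSlack_of_isSlack (h : IsSlack g s u v) : dropSlack g s u v = 0 :=
  if_pos h

theorem dropSlack_of_not_isSlack (h : ¬ IsSlack g s u v) : dropSlack g s u v = s u v :=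
  if_neg h

theorem validState_dropSlack (hs : validState g s) : validState g (dropSlack g s) := by
  have hbetween : ∀ u v, 0 ≤ dropSlack g s u v ∧ dropSlack g s u v ≤ s u v := by
    intro u v
    by_cases h : IsSlack g s u v
    · simp only [dropSlack_of_isSlack h, le_refl, hs.1 u v, and_self]
    · simp only [dropSlack_of_not_isSlack h, le_refl, hs.1 u v, and_self]
  refine ⟨fun u v => (hbetween u v).1, fun u v huv => ?_, fun u => ?_⟩
  · exact le_antisymm ((hbetween u v).2.trans_eq (hs.2.1 u v huv)) (hbetween u v).1
  · exact (sum_le_sum fun v _ => (hbetween u v).2).trans (hs.2.2 u)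

theorem not_isSlack_dropSlack (g : NCGame V) (s : V → V → ℝ) (u v : V) :
    ¬ IsSlack g (dropSlack g s) u v := by
  intro hdrop
  by_cases h : IsSlack g s u v
  · exact hdrop.2.1.ne' (dropSlack_of_isSlack h)
  · have h' : ¬ IsSlack g s v u := fun hvu => h hvu.symm
    rw [IsSlack, dropSlack_of_not_isSlack h, dropSlack_of_not_isSlack h'] at hdrop
    exact h hdrop

end FlatEdges

/-- with class-`C` rewards having nondecreasing differences, every
pairwise equilibrium can be transformed into one of the same social welfare
without slack edges. -/
theorem pairwise_eq_no_slack (g : NCGame V)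
    (hC : ∀ u v, g.Adj u v → InClassC (g.f u v))
    (hdiff : ∀ u v, g.Adj u v → ∀ x x' y y', 0 ≤ x → x ≤ x' → 0 ≤ y → y ≤ y' →
      g.f u v x' y - g.f u v x y ≤ g.f u v x' y' - g.f u v x y')
    (s : V → V → ℝ) (hs : IsPairwiseEq g s) :
    ∃ s', IsPairwiseEq g s' ∧ welfare g s' = welfare g s ∧
      ∀ u v, g.Adj u v →
        ¬(0 < s' u v ∧ s' u v < g.B u ∧ 0 < s' v u ∧ s' v u < g.B v) := by
  have heq : EqOffFlat g (dropSlack g s) s := fun u v hflat =>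
    dropSlack_of_not_isSlack fun hslack => hflat (hs.isFlat_of_isSlack hC hdiff hslack)
  have hvalid : validState g (dropSlack g s) := validState_dropSlack hs.1.1
  exact ⟨dropSlack g s, hs.of_eqOffFlat heq hvalid, heq.welfare_eq hvalid hs.1.1,
    fun u v huv hslack => not_isSlack_dropSlack g s u v ⟨huv, hslack⟩⟩
end
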